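/- arXiv:1809.07699 — 3 statements merged into one kernel-verified Lean document; each statement's English description precedes it below -/
import Mathlib

section
/- Let p be a prime and let G be a finite p-group with |G| = p^n, n ≥ 4, of nilpotence class exactly 2, such that cod(G) = {p^i | 0 ≤ i ≤ n-1}. Then the derived subgroup G' has order p, the center Z(G) is cyclic of index p^2 in G, and G is isomorphic to a semidirect product Z_{p^{n-1}} ⋊ Z_p (in particular G has an element of order p^{n-1} generating a subgroup of index p, complemented by a subgroup of order p). -/
open CategoryTheory

/-- The degree of a complex representation: the dimension of the underlying vector space. -/
noncomputable def repDegree {G : Type} [Group G] (V : FDRep ℂ G) : ℕ :=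
  Module.finrank ℂ V

/-- The kernel of a representation of `G`, as a subgroup of `G`. -/
noncomputable def repKer {G : Type} [Group G] (V : FDRep ℂ G) : Subgroup G :=
  MonoidHom.ker (Representation.asGroupHom V.ρ)

/-- The codegree of a character: `|G : ker χ| / χ(1)`. -/
noncomputable def codegree {G : Type} [Group G] (V : FDRep ℂ G) : ℕ :=
  (repKer V).index / repDegree V

/-- `cod(G)`: the set of codegrees of the irreducible complex characters of `G`. -/
def codSet (G : Type) [Group G] : Set ℕ :=
  {m | ∃ V : FDRep ℂ G, Simple V ∧ codegree V = m}

/-- `cd(G)`: the set of degrees of the irreducible complex characters of `G`. -/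
def cdSet (G : Type) [Group G] : Set ℕ :=
  {m | ∃ V : FDRep ℂ G, Simple V ∧ repDegree V = m}

/-- The nilpotency class of `G`: the least `n` with `upperCentralSeries G n = ⊤`. -/
noncomputable def nilClass (G : Type) [Group G] : ℕ :=
  sInf {n | upperCentralSeries G n = ⊤}

open scoped Classical in
/-- The character of `G` induced from the linear character `lam` of the subgroup `H`. -/
noncomputable def indLinearChar {G : Type} [Group G] [Fintype G] (H : Subgroup G)
    (lam : H →* ℂˣ) : G → ℂ :=
  fun g => (∑ x : G, if h : x * g * x⁻¹ ∈ H then ((lam ⟨x * g * x⁻¹, h⟩ : ℂˣ) : ℂ) else 0) /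
    (Nat.card H : ℂ)

/-- A finite group is normally monomial if every irreducible complex character is induced
from a linear character of a normal subgroup. -/
def NormallyMonomial (G : Type) [Group G] [Fintype G] : Prop :=
  ∀ V : FDRep ℂ G, Simple V → ∃ (H : Subgroup G) (lam : H →* ℂˣ),
    H.Normal ∧ FDRep.character V = indLinearChar H lam

theorem aux_schur {G : Type} [Group G] (V : FDRep ℂ G) [Simple V] (f : V →ₗ[ℂ] V)
    (hf : ∀ g, f ∘ₗ V.ρ g = V.ρ g ∘ₗ f) : ∃ c : ℂ, f = c • LinearMap.id := by
  let F : V ⟶ V := ⟨InducedCategory.homMk (ModuleCat.ofHom f), fun g ↦ by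
    ext1
    ext1
    exact LinearMap.congr_fun (hf g) _⟩
  obtain ⟨c, hc⟩ := endomorphism_simple_eq_smul_id ℂ F
  refine ⟨c, ?_⟩
  have := congrArg (fun t : V ⟶ V => t.hom.hom.hom) hc
  exact this.symm

/-- elements acting centrally -/
def auxZ {G : Type} [Group G] (V : FDRep ℂ G) : Subgroup G where
  carrier := {g | ∀ x, V.ρ (g * x) = V.ρ (x * g)}
  one_mem' := by simp
  mul_mem' := by
    intro a b ha hb x
    have h1 := ha (b * x)
    have h2 := hb (x * a)
    have h3 := hb x
    have h4 := ha x
    simp only [map_mul] at *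
    rw [mul_assoc, h3, ← mul_assoc, h4, mul_assoc]
  inv_mem' := by
    intro a ha x
    have h := ha (a⁻¹ * x * a⁻¹)
    simpa [mul_assoc] using h.symm

theorem aux_scalar {G : Type} [Group G] (V : FDRep ℂ G) [Simple V] (g : G) :
    g ∈ auxZ V ↔ ∃ c : ℂ, V.ρ g = c • LinearMap.id := by
  constructor
  · intro h
    apply aux_schur
    intro x
    have := h x
    rw [map_mul, map_mul] at this
    exact this
  · rintro ⟨c, hc⟩ x
    rw [map_mul, map_mul, hc]
    ext v
    simp

theorem aux_ker {G : Type} [Group G] (V : FDRep ℂ G) (g : G) :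
    g ∈ repKer V ↔ V.ρ g = 1 := by
  unfold repKer
  rw [MonoidHom.mem_ker, ← Units.val_inj, Representation.asGroupHom_apply]
  rfl

theorem aux_finrank_pos {G : Type} [Group G] (V : FDRep ℂ G) [Simple V] :
    0 < repDegree V := by
  by_contra h
  have h0 : Module.finrank ℂ V = 0 := by unfold repDegree at h; omega
  have hs : Subsingleton V := Module.finrank_zero_iff.mp h0
  apply id_nonzero V
  ext v
  exact Subsingleton.elim _ _

theorem aux_degree {G : Type} [Group G] [Fintype G] (V : FDRep ℂ G) [Simple V]
    (hc : ∀ x y : G, x * y * x⁻¹ * y⁻¹ ∈ Subgroup.center G) :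
    (repDegree V) ^ 2 * Nat.card (auxZ V) = Nat.card G := by
  classical
  have hinv : Invertible (Nat.card G : ℂ) :=
    invertibleOfNonzero (by exact_mod_cast Nat.card_pos.ne')
  have ho := FDRep.char_orthonormal V V
  rw [if_pos ⟨Iso.refl V⟩] at ho
  have hpos := aux_finrank_pos V
  have hterm : ∀ g : G, V.character g * V.character g⁻¹ =
      if g ∈ auxZ V then ((repDegree V : ℂ)) ^ 2 else 0 := by
    intro g
    split_ifs with hg
    · obtain ⟨c, hc1⟩ := (aux_scalar V g).1 hg
      obtain ⟨d, hd⟩ := (aux_scalar V g⁻¹).1 ((auxZ V).inv_mem hg)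
      have h1 : (c * d) • (LinearMap.id : V →ₗ[ℂ] V) = LinearMap.id := by
        have : V.ρ g * V.ρ g⁻¹ = 1 := by rw [← map_mul]; simp
        rw [hc1, hd] at this
        rw [mul_comm, mul_smul]
        ext v
        have := LinearMap.congr_fun this v
        simpa using this
      have h2 := congrArg (LinearMap.trace ℂ V) h1
      rw [map_smul, LinearMap.trace_id] at h2
      change _ = (repDegree V : ℂ) at h2
      change (c * d) • (repDegree V : ℂ) = _ at h2
      simp only [FDRep.character]
      rw [hc1, hd, map_smul, map_smul, LinearMap.trace_id]
      change c • (repDegree V : ℂ) * d • (repDegree V : ℂ) = _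
      simp only [smul_eq_mul] at *
      linear_combination (repDegree V : ℂ) * h2
    · have : V.character g = 0 := by
        have hg' : ¬ ∀ x, V.ρ (g * x) = V.ρ (x * g) := hg
        push Not at hg'
        obtain ⟨x, hx⟩ := hg'
        have hz : x * g * x⁻¹ * g⁻¹ ∈ auxZ V := fun y => by
          rw [(Subgroup.mem_center_iff.1 (hc x g) y)]
        obtain ⟨c, hc1⟩ := (aux_scalar V _).1 hz
        have e : x * g * x⁻¹ = (x * g * x⁻¹ * g⁻¹) * g := by simp
        have h1 := FDRep.char_conj V g x
        have h2 : V.ρ (x * g * x⁻¹) = c • V.ρ g := by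
          rw [e, map_mul, hc1]; ext v; simp
        have h3 : V.character (x * g * x⁻¹) = c * V.character g := by
          simp only [FDRep.character]
          rw [h2, map_smul, smul_eq_mul]
        have hc' : c ≠ 1 := by
          rintro rfl
          apply hx
          have : V.ρ (x * g * x⁻¹ * x) = V.ρ (g * x) := by
            rw [map_mul, h2, one_smul, map_mul]
          rw [← this]; congr 1; group
        rw [h1] at h3
        have : (c - 1) * V.character g = 0 := by linear_combination -h3
        exact (mul_eq_zero.1 this).resolve_left (sub_ne_zero.2 hc')
      rw [this, zero_mul]
  simp_rw [hterm] at ho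
  rw [← Finset.sum_filter, Finset.sum_const] at ho
  have hcardZ : (Finset.univ.filter (fun g => g ∈ auxZ V)).card = Nat.card (auxZ V) := by
    rw [← Fintype.card_subtype, Nat.card_eq_fintype_card]
  rw [hcardZ, nsmul_eq_mul] at ho
  have hne : (Nat.card G : ℂ) ≠ 0 := by exact_mod_cast Nat.card_pos.ne'
  have : ((repDegree V : ℂ)) ^ 2 * (Nat.card (auxZ V) : ℂ) = (Nat.card G : ℂ) := by
    field_simp at ho
    linear_combination ho
  exact_mod_cast this

theorem aux_char {G : Type} [Group G] (V : FDRep ℂ G) [Simple V] :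
    ∃ l : auxZ V →* ℂ, ∀ g : auxZ V, l g = 1 ↔ (g : G) ∈ repKer V := by
  have hs : ∀ g : auxZ V, ∃ c : ℂ, V.ρ (g : G) = c • LinearMap.id :=
    fun g => (aux_scalar V g).1 g.2
  choose c hc using hs
  have hn : Nontrivial V := Module.finrank_pos_iff.1 (aux_finrank_pos V)
  obtain ⟨v, hv⟩ := exists_ne (0 : V)
  have hcv : ∀ g : auxZ V, V.ρ (g : G) v = c g • v := fun g => by rw [hc g]; rfl
  have inj : ∀ a b : ℂ, a • v = b • v → a = b := fun a b h => smul_left_injective ℂ hv h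
  refine ⟨⟨⟨c, ?_⟩, ?_⟩, ?_⟩
  · apply inj; rw [← hcv]; simp
  · intro a b
    apply inj
    change c (a * b) • v = (c a * c b) • v
    rw [← hcv, Subgroup.coe_mul, map_mul, Module.End.mul_apply, hcv b, map_smul, hcv a, smul_smul, mul_comm]
  · intro g
    rw [aux_ker]
    change c g = 1 ↔ _
    constructor
    · intro h; rw [hc, h, one_smul]; rfl
    · intro h; apply inj; rw [← hcv, h]; simp

theorem aux_ker_le {G : Type} [Group G] (V : FDRep ℂ G) : repKer V ≤ auxZ V := by
  intro g hg x
  rw [aux_ker] at hg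
  rw [map_mul, map_mul, hg, one_mul, mul_one]

theorem aux_center_le {G : Type} [Group G] (V : FDRep ℂ G) : Subgroup.center G ≤ auxZ V := by
  intro g hg x
  rw [Subgroup.mem_center_iff.1 hg x]

theorem aux_cod {G : Type} [Group G] [Fintype G] (V : FDRep ℂ G) [Simple V]
    (hc : ∀ x y : G, x * y * x⁻¹ * y⁻¹ ∈ Subgroup.center G)
    (p n m : ℕ) (hp : p.Prime) (hcard : Nat.card G = p ^ n) (hm : codegree V = p ^ m) :
    ∃ a b, repDegree V = p ^ a ∧ Nat.card (repKer V) = p ^ b ∧ a + b + m = n := by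
  have hd := aux_degree V hc
  rw [hcard] at hd
  obtain ⟨a, -, ha⟩ := (Nat.dvd_prime_pow hp).1
    ((dvd_pow_self _ two_ne_zero).trans (Dvd.intro _ hd))
  obtain ⟨b, hbn, hb⟩ := (Nat.dvd_prime_pow hp).1 (hcard ▸ (repKer V).card_subgroup_dvd_card)
  have hle := Subgroup.card_dvd_of_le (aux_ker_le V)
  refine ⟨a, b, ha, hb, ?_⟩
  have h1 : 2 * a + b ≤ n := by
    have : p ^ (2 * a + b) ∣ p ^ n := by
      rw [← hd, ha, pow_add, mul_comm 2 a, pow_mul, ← hb]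
      exact mul_dvd_mul_left _ hle
    exact (Nat.pow_dvd_pow_iff_le_right hp.one_lt).1 this
  have h2 : (repKer V).index = p ^ (n - b) := by
    have := (repKer V).card_mul_index
    rw [hcard, hb] at this
    apply Nat.eq_of_mul_eq_mul_left (pow_pos hp.pos b)
    rw [this, ← pow_add]; congr 1; omega
  unfold codegree at hm
  rw [h2, ha, Nat.pow_div (by omega) hp.pos] at hm
  have := Nat.pow_right_injective hp.two_le hm
  omega

theorem aux_linear {G : Type} [Group G] [Fintype G] (V : FDRep ℂ G) [Simple V]
    (hc : ∀ x y : G, x * y * x⁻¹ * y⁻¹ ∈ Subgroup.center G) (h1 : repDegree V = 1) :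
    ∃ l : G →* ℂ, ∀ g : G, l g = 1 ↔ g ∈ repKer V := by
  have hd := aux_degree V hc
  rw [h1, one_pow, one_mul] at hd
  have ht : auxZ V = ⊤ := Subgroup.eq_top_of_card_eq _ hd
  obtain ⟨l, hl⟩ := aux_char V
  let e : G →* auxZ V := (MonoidHom.id G).codRestrict (auxZ V) (fun x => by rw [ht]; trivial)
  exact ⟨l.comp e, fun g => hl (e g)⟩

/-- If `V` is linear there is an element whose powers in the kernel are exactly the multiples of
the index of the kernel. -/
theorem aux_gen {G : Type} [Group G] [Fintype G] (K : Subgroup G) (l : G →* ℂ)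
    (hl : ∀ g : G, l g = 1 ↔ g ∈ K) : 
    K.Normal ∧ ∃ g : G, ∀ m : ℤ, g ^ m ∈ K ↔ (K.index : ℤ) ∣ m := by
  have hN : l.toHomUnits.ker = K := by
    ext x
    rw [MonoidHom.mem_ker, ← hl, ← Units.val_inj]
    simp
  have hK : K.Normal := hN ▸ inferInstance
  refine ⟨hK, ?_⟩
  have hcyc : IsCyclic (G ⧸ K) := by
    subst hN
    refine isCyclic_of_injective_ringHom
      ((Units.coeHom ℂ).comp (QuotientGroup.kerLift l.toHomUnits)) ?_
    exact Units.val_injective.comp (QuotientGroup.kerLift_injective _)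
  obtain ⟨q, hq⟩ := hcyc.exists_generator
  obtain ⟨g, rfl⟩ := QuotientGroup.mk_surjective q
  refine ⟨g, fun m => ?_⟩
  have ho : orderOf (g : G ⧸ K) = K.index := orderOf_eq_card_of_forall_mem_zpowers hq
  rw [← QuotientGroup.eq_one_iff, QuotientGroup.mk_zpow, ← ho, orderOf_dvd_iff_zpow_eq_one]

theorem aux_class {G : Type} [Group G] (h : nilClass G = 2) :
    (∀ x y : G, x * y * x⁻¹ * y⁻¹ ∈ Subgroup.center G) ∧ ¬ ∀ x y : G, x * y = y * x := by
  have hne : {n | Subgroup.upperCentralSeries G n = ⊤}.Nonempty := by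
    by_contra h0
    rw [Set.not_nonempty_iff_eq_empty] at h0
    have : nilClass G = 0 := by
      change sInf {n | Subgroup.upperCentralSeries G n = ⊤} = 0
      rw [h0]; simp
    omega
  have h2 : Subgroup.upperCentralSeries G 2 = ⊤ := by
    have := Nat.sInf_mem hne
    change Subgroup.upperCentralSeries G (nilClass G) = ⊤ at this
    rwa [h] at this
  constructor
  · intro x y
    have hx : x ∈ Subgroup.upperCentralSeries G 2 := by rw [h2]; trivial
    have := Subgroup.mem_upperCentralSeries_succ_iff.1 hx y
    rw [Subgroup.upperCentralSeries_one] at this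
    exact this
  · intro hcomm
    have : Subgroup.upperCentralSeries G 1 = ⊤ := by
      rw [Subgroup.upperCentralSeries_one, eq_top_iff]
      intro x _
      exact Subgroup.mem_center_iff.2 fun y => hcomm y x
    have : nilClass G ≤ 1 := Nat.sInf_le this
    omega

/-- The unique subgroup of prime order of a cyclic center. -/
theorem aux_unique {G : Type} [Group G] [Fintype G] (p : ℕ) (hp : p.Prime)
    (hcyc : IsCyclic (Subgroup.center G)) (w v : G) (hw : w ∈ Subgroup.center G) (hw1 : w ≠ 1)
    (hwp : w ^ p = 1) (hv : v ∈ Subgroup.center G) (hvp : v ^ p = 1) :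
    v ∈ Subgroup.zpowers w := by
  classical
  have ho : orderOf w = p := orderOf_eq_prime hwp hw1 (hp := ⟨hp⟩)
  let S : Finset (Subgroup.center G) := Finset.univ.filter (fun a => a ^ p = 1)
  have hS : S.card ≤ p := IsCyclic.card_pow_eq_one_le hp.pos
  let W : Subgroup (Subgroup.center G) := Subgroup.zpowers ⟨w, hw⟩
  let T : Finset (Subgroup.center G) := Finset.univ.filter (fun a => a ∈ W)
  have hT : T.card = p := by
    rw [← Fintype.card_subtype, ← Nat.card_eq_fintype_card]
    rw [Nat.card_zpowers, ← Subgroup.orderOf_coe]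
    exact ho
  have hTS : T ⊆ S := by
    intro a ha
    simp only [T, S, Finset.mem_filter, Finset.mem_univ, true_and] at ha ⊢
    obtain ⟨m, rfl⟩ := Subgroup.mem_zpowers_iff.1 ha
    rw [← zpow_natCast, ← zpow_mul, mul_comm, zpow_mul, zpow_natCast]
    have : (⟨w, hw⟩ : Subgroup.center G) ^ p = 1 := Subtype.ext hwp
    rw [this, one_zpow]
  have hEq : T = S := Finset.eq_of_subset_of_card_le hTS (by omega)
  have hvS : (⟨v, hv⟩ : Subgroup.center G) ∈ T := by
    rw [hEq]
    simp only [S, Finset.mem_filter, Finset.mem_univ, true_and]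
    exact Subtype.ext hvp
  simp only [T, Finset.mem_filter, Finset.mem_univ, true_and] at hvS
  obtain ⟨m, hm⟩ := Subgroup.mem_zpowers_iff.1 hvS
  exact Subgroup.mem_zpowers_iff.2 ⟨m, congrArg Subtype.val hm⟩

theorem aux_pow_center {G : Type} [Group G] [Fintype G] (p : ℕ) (hp : p.Prime)
    (hnc : ¬ ∀ x y : G, x * y = y * x) (hidx : (Subgroup.center G).index = p ^ 2) (x : G) :
    x ^ p ∈ Subgroup.center G := by
  rw [← QuotientGroup.eq_one_iff, QuotientGroup.mk_pow]
  have hd : orderOf (x : G ⧸ Subgroup.center G) ∣ p ^ 2 := by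
    rw [← hidx]; exact orderOf_dvd_natCard _
  obtain ⟨k, hk, hk'⟩ := (Nat.dvd_prime_pow hp).1 hd
  have : k ≠ 2 := by
    rintro rfl
    have : IsCyclic (G ⧸ Subgroup.center G) :=
      isCyclic_of_orderOf_eq_card _ (hk'.trans hidx.symm)
    have hm := MonoidHom.isMulCommutative_of_isCyclic_of_ker_le_center
      (QuotientGroup.mk' (Subgroup.center G)) (by simp)
    exact hnc (fun a b => hm.is_comm.comm a b)
  apply orderOf_dvd_iff_pow_eq_one.1
  rw [hk']
  calc p ^ k ∣ p ^ 1 := pow_dvd_pow _ (by omega)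
    _ = p := pow_one p

theorem aux_comm_pow {G : Type} [Group G] (x y : G)
    (hc : x * y * x⁻¹ * y⁻¹ ∈ Subgroup.center G) (m : ℕ) :
    (x * y * x⁻¹ * y⁻¹) ^ m = x ^ m * y * (x ^ m)⁻¹ * y⁻¹ := by
  induction m with
  | zero => simp
  | succ k ih =>
    rw [pow_succ, ih]
    set c := x * y * x⁻¹ * y⁻¹ with hcd
    have h := Subgroup.mem_center_iff.1 hc
    have e : x ^ (k + 1) * y * (x ^ (k + 1))⁻¹ * y⁻¹ = x ^ k * c * (y * (x ^ k)⁻¹ * y⁻¹) := by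
      rw [hcd, pow_succ]; group
    rw [e, mul_assoc (x ^ k) c, ← h (y * (x ^ k)⁻¹ * y⁻¹)]
    group

theorem aux_comm_le {G : Type} [Group G] (H : Subgroup G)
    (h : ∀ x y : G, x * y * x⁻¹ * y⁻¹ ∈ H) : commutator G ≤ H := by
  rw [commutator_def]
  exact Subgroup.commutator_le.2 fun x _ y _ => h x y

theorem aux_comm_mem {G : Type} [Group G] (x y : G) :
    x * y * x⁻¹ * y⁻¹ ∈ commutator G := by
  rw [commutator_def]
  exact Subgroup.commutator_mem_commutator (Subgroup.mem_top x) (Subgroup.mem_top y)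

theorem aux_faithful {G : Type} [Group G] [Fintype G] (p n : ℕ) (hp : p.Prime)
    (hcard : Nat.card G = p ^ n) (hn : 4 ≤ n)
    (hc : ∀ x y : G, x * y * x⁻¹ * y⁻¹ ∈ Subgroup.center G)
    (hnc : ¬ ∀ x y : G, x * y = y * x) (V : FDRep ℂ G) [Simple V]
    (hV : codegree V = p ^ (n - 1)) :
    IsCyclic (Subgroup.center G) ∧ (Subgroup.center G).index = p ^ 2 := by
  obtain ⟨a, b, ha, hb, hab⟩ := aux_cod V hc p n (n - 1) hp hcard hV
  have hab' : (a = 0 ∧ b = 1) ∨ (a = 1 ∧ b = 0) := by omega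
  rcases hab' with ⟨rfl, rfl⟩ | ⟨rfl, rfl⟩
  · exfalso
    rw [pow_one] at hb
    obtain ⟨l, hl⟩ := aux_linear V hc (by simpa using ha)
    have hle : commutator G ≤ repKer V := by
      apply aux_comm_le
      intro x y
      rw [← hl]
      have h1 : l x * l x⁻¹ = 1 := by rw [← map_mul]; simp
      have h2 : l y * l y⁻¹ = 1 := by rw [← map_mul]; simp
      simp only [map_mul]
      linear_combination l y * l y⁻¹ * h1 + h2
    have hne : commutator G ≠ ⊥ := by
      intro h0
      apply hnc
      intro x y
      have := aux_comm_mem x y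
      rw [h0, Subgroup.mem_bot] at this
      calc x * y = (x * y * x⁻¹ * y⁻¹) * (y * x) := by group
        _ = y * x := by rw [this, one_mul]
    have heq : commutator G = repKer V := by
      apply Subgroup.eq_of_le_of_card_ge hle
      have hd := Subgroup.card_dvd_of_le hle
      rw [hb] at hd ⊢
      rcases (Nat.dvd_prime hp).1 hd with h1 | h1
      · exact absurd (Subgroup.card_eq_one.1 h1) hne
      · exact h1.ge
    have hkc : repKer V ≤ Subgroup.center G := by
      rw [← heq]
      exact aux_comm_le _ hc
    have hm := MonoidHom.isMulCommutative_of_isCyclic_of_ker_le_center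
      l.toHomUnits.rangeRestrict (by
        rw [MonoidHom.ker_rangeRestrict]
        intro x hx
        apply hkc
        rw [← hl]
        rw [MonoidHom.mem_ker, ← Units.val_inj] at hx
        simpa using hx)
    exact hnc (fun a b => hm.is_comm.comm a b)
  · rw [pow_zero] at hb
    have hbot := Subgroup.card_eq_one.1 hb
    have hZ : auxZ V = Subgroup.center G := by
      apply le_antisymm _ (aux_center_le V)
      intro g hg
      rw [Subgroup.mem_center_iff]
      intro x
      have h1 := hg x
      have h2 : (x * g) * (g * x)⁻¹ ∈ repKer V := by
        rw [aux_ker, map_mul, ← h1, ← map_mul]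
        simp
      rw [hbot, Subgroup.mem_bot] at h2
      exact mul_inv_eq_one.1 h2
    have hd := aux_degree V hc
    rw [hZ, ha, pow_one] at hd
    obtain ⟨l, hl⟩ := aux_char V
    constructor
    · rw [← hZ]
      refine isCyclic_of_injective_ringHom l ?_
      intro x y hxy
      have h1 : l (x * y⁻¹) = 1 := by
        rw [map_mul, hxy, ← map_mul]; simp
      rw [hl, hbot, Subgroup.mem_bot] at h1
      exact mul_inv_eq_one.1 (Subtype.ext h1)
    · have h3 := (Subgroup.center G).card_mul_index
      rw [← hd, mul_comm] at h3
      exact Nat.eq_of_mul_eq_mul_right Nat.card_pos h3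

theorem class_two_full_codegrees (p n : ℕ) (hp : p.Prime) (G : Type) [Group G] [Fintype G]
    (hcard : Fintype.card G = p ^ n) (hn : 4 ≤ n) (hclass : nilClass G = 2)
    (hcod : codSet G = {m | ∃ i ≤ n - 1, m = p ^ i}) :
    Nat.card (commutator G) = p ∧ IsCyclic (Subgroup.center G) ∧
      (Subgroup.center G).index = p ^ 2 ∧
      ∃ φ : Multiplicative (ZMod p) →* MulAut (Multiplicative (ZMod (p ^ (n - 1)))),
        Nonempty (G ≃* Multiplicative (ZMod (p ^ (n - 1))) ⋊[φ] Multiplicative (ZMod p)) := by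
  rw [← Nat.card_eq_fintype_card] at hcard
  obtain ⟨hc, hnc⟩ := aux_class hclass
  obtain ⟨V, hVs, hV⟩ : p ^ (n - 1) ∈ codSet G := by rw [hcod]; exact ⟨n - 1, le_rfl, rfl⟩
  obtain ⟨W, hWs, hW⟩ : p ^ (n - 2) ∈ codSet G := by
    rw [hcod]; exact ⟨n - 2, by omega, rfl⟩
  obtain ⟨hcyc, hidx⟩ := aux_faithful p n hp hcard hn hc hnc V hV
  have hpc := aux_pow_center p hp hnc hidx
  -- commutators have order dividing p
  have hcp : ∀ x y : G, (x * y * x⁻¹ * y⁻¹) ^ p = 1 := by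
    intro x y
    rw [aux_comm_pow x y (hc x y), ← Subgroup.mem_center_iff.1 (hpc x) y]
    group
  -- a central element of order p inside a subgroup forces the derived group inside
  have hinc : ∀ (N : Subgroup G) (w : G), w ∈ N → w ∈ Subgroup.center G → w ≠ 1 →
      w ^ p = 1 → commutator G ≤ N := by
    intro N w hwN hwZ hw1 hwp
    apply aux_comm_le
    intro x y
    have := aux_unique p hp hcyc w _ hwZ hw1 hwp (hc x y) (hcp x y)
    exact (Subgroup.zpowers_le.2 hwN) this
  obtain ⟨x0, y0, hxy⟩ : ∃ x y : G, x * y * x⁻¹ * y⁻¹ ≠ 1 := by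
    by_contra! h
    apply hnc
    intro x y
    calc x * y = (x * y * x⁻¹ * y⁻¹) * (y * x) := by group
      _ = y * x := by rw [h, one_mul]
  set w := x0 * y0 * x0⁻¹ * y0⁻¹ with hw
  have hwG : w ∈ commutator G := aux_comm_mem x0 y0
  have hwZ : w ∈ Subgroup.center G := hc x0 y0
  have hwp : w ^ p = 1 := hcp x0 y0
  have hGw : commutator G = Subgroup.zpowers w :=
    le_antisymm (hinc _ w (Subgroup.mem_zpowers w) hwZ hxy hwp) (Subgroup.zpowers_le.2 hwG)
  have hG' : Nat.card (commutator G) = p := by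
    rw [hGw, Nat.card_zpowers]
    exact orderOf_eq_prime hwp hxy (hp := ⟨hp⟩)
  refine ⟨hG', hcyc, hidx, ?_⟩
  -- the linear character of codegree p^(n-2)
  obtain ⟨a, b, ha, hb, hab⟩ := aux_cod W hc p n (n - 2) hp hcard hW
  have hdW := aux_degree W hc
  have hb0 : b ≠ 0 := by
    rintro rfl
    obtain rfl : a = 2 := by omega
    have h1 := Subgroup.card_dvd_of_le (aux_center_le W)
    have h2 := (Subgroup.center G).card_mul_index
    rw [← hdW, hidx, ha] at h2
    have h3 := Nat.le_of_dvd Nat.card_pos h1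
    have h4 : 0 < Nat.card (Subgroup.center G) := Nat.card_pos
    have h5 : p ^ 2 < (p ^ 2) ^ 2 := by
      rw [← pow_mul]; exact Nat.pow_lt_pow_right hp.one_lt (by norm_num)
    nlinarith
  have hKne : repKer W ≠ ⊥ := by
    intro h0
    rw [h0, Subgroup.card_bot] at hb
    have : 1 < p ^ b := Nat.one_lt_pow hb0 hp.one_lt
    omega
  have hKn : (repKer W).Normal := by unfold repKer; infer_instance
  have hGK : commutator G ≤ repKer W := by
    obtain ⟨⟨x, hx⟩, hx1'⟩ := Subgroup.ne_bot_iff_exists_ne_one.1 hKne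
    have hx1 : x ≠ 1 := fun h => hx1' (Subtype.ext h)
    by_cases hxZ : x ∈ Subgroup.center G
    · -- pass to an element of order p in `zpowers x`
      have hd : p ∣ Nat.card (Subgroup.zpowers x) := by
        have h1 : Nat.card (Subgroup.zpowers x) ∣ p ^ n :=
          hcard ▸ Subgroup.card_subgroup_dvd_card _
        obtain ⟨k, -, hk⟩ := (Nat.dvd_prime_pow hp).1 h1
        rw [hk]
        apply dvd_pow_self
        rintro rfl
        rw [pow_zero, Subgroup.card_eq_one, Subgroup.zpowers_eq_bot] at hk
        exact hx1 hk
      have := Fact.mk hp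
      obtain ⟨u, hu⟩ := exists_prime_orderOf_dvd_card' p hd
      have hu1 : (u : G) ≠ 1 := by
        intro h
        have : u = 1 := Subtype.ext h
        rw [this, orderOf_one] at hu
        exact hp.one_lt.ne hu
      refine hinc _ (u : G) (Subgroup.zpowers_le.2 hx u.2) (Subgroup.zpowers_le.2 hxZ u.2) hu1 ?_
      have h2 := pow_orderOf_eq_one u
      rw [hu] at h2
      exact congrArg Subtype.val h2
    · rw [Subgroup.mem_center_iff] at hxZ
      push Not at hxZ
      obtain ⟨y, hy⟩ := hxZ
      refine hinc _ (x * y * x⁻¹ * y⁻¹) ?_ (hc x y) ?_ (hcp x y)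
      · have := (repKer W).mul_mem hx (hKn.conj_mem _ ((repKer W).inv_mem hx) y)
        simpa [mul_assoc] using this
      · intro h
        apply hy
        calc y * x = (x * y * x⁻¹ * y⁻¹) * (y * x) := by rw [h, one_mul]
          _ = x * y := by group
  have hd1 : repDegree W = 1 := by
    have ht : auxZ W = ⊤ := by
      rw [eq_top_iff]
      intro g _ x
      have h1 := hGK (aux_comm_mem g x)
      rw [aux_ker] at h1
      have : g * x = (g * x * g⁻¹ * x⁻¹) * (x * g) := by group
      rw [this, map_mul, h1, one_mul]
    rw [ht, Subgroup.card_top] at hdW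
    have h2 : repDegree W ^ 2 = 1 := by
      apply Nat.eq_of_mul_eq_mul_right (Nat.card_pos (α := G))
      rw [hdW, one_mul]
    exact (Nat.pow_eq_one.1 h2).resolve_right two_ne_zero
  have ha0 : a = 0 := by
    by_contra h
    have : 1 < p ^ a := Nat.one_lt_pow h hp.one_lt
    omega
  obtain rfl : b = 2 := by omega
  obtain ⟨l, hl⟩ := aux_linear W hc hd1
  obtain ⟨-, g, hg⟩ := aux_gen (repKer W) l hl
  generalize repKer W = K at *
  have hKi : K.index = p ^ (n - 2) := by
    have := K.card_mul_index
    rw [hcard, hb] at this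
    apply Nat.eq_of_mul_eq_mul_left (pow_pos hp.pos 2)
    rw [this, ← pow_add]; congr 1; omega
  rw [hKi] at hg
  have hp2 : p ^ (n - 2) = p * p ^ (n - 3) := by
    rw [← pow_succ']; congr 1; omega
  -- order of g
  obtain ⟨k, hkn, hk⟩ := (Nat.dvd_prime_pow hp).1 (hcard ▸ orderOf_dvd_natCard g)
  have hk1 : n - 2 ≤ k := by
    have h1 : g ^ ((orderOf g : ℕ) : ℤ) ∈ K := by
      rw [zpow_natCast, pow_orderOf_eq_one]; exact K.one_mem
    rw [hg, hk] at h1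
    exact (Nat.pow_dvd_pow_iff_le_right hp.one_lt).1 (Int.natCast_dvd_natCast.1 h1)
  have hgpc : ∀ j, 1 ≤ j → g ^ (p ^ j) ∈ Subgroup.center G := by
    intro j hj
    obtain ⟨i, rfl⟩ := Nat.exists_eq_add_of_le' hj
    rw [pow_succ', pow_mul]
    exact Subgroup.pow_mem _ (hpc g) _
  have hGH : commutator G ≤ Subgroup.zpowers g := by
    refine hinc _ (g ^ p ^ (k - 1)) (Subgroup.pow_mem _ (Subgroup.mem_zpowers g) _)
      (hgpc _ (by omega)) ?_ ?_
    · intro h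
      have := orderOf_dvd_of_pow_eq_one h
      rw [hk, Nat.pow_dvd_pow_iff_le_right hp.one_lt] at this
      omega
    · rw [← pow_mul, ← pow_succ]
      have : k - 1 + 1 = k := by omega
      rw [this, ← hk, pow_orderOf_eq_one]
  have hk2 : k = n - 1 := by
    have h1 : k ≠ n - 2 := by
      rintro rfl
      obtain ⟨m, hm⟩ := Subgroup.mem_zpowers_iff.1 (hGH hwG)
      have h2 : g ^ m ∈ K := by rw [hm]; exact hGK hwG
      rw [hg, ← hk, orderOf_dvd_iff_zpow_eq_one, hm] at h2
      exact hxy h2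
    have h2 : k ≠ n := by
      rintro rfl
      apply hnc
      have := isCyclic_of_orderOf_eq_card g (hk.trans hcard.symm)
      intro x y
      exact (IsCyclic.isMulCommutative (α := G)).is_comm.comm x y
    omega
  subst hk2
  set H := Subgroup.zpowers g with hH
  have hHcard : Nat.card H = p ^ (n - 1) := by rw [hH, Nat.card_zpowers, hk]
  have hHn : H.Normal := by
    constructor
    intro x hx y
    have := H.mul_mem (hGH (aux_comm_mem y x)) hx
    simpa [mul_assoc] using this
  have hHi : H.index = p := by
    have := H.card_mul_index
    rw [hcard, hHcard] at this
    apply Nat.eq_of_mul_eq_mul_left (pow_pos hp.pos (n - 1))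
    rw [this, ← pow_succ]; congr 1; omega
  obtain ⟨x, hxK, hxH⟩ : ∃ x ∈ K, x ∉ H := by
    by_contra! h
    have h1 : K ≤ Subgroup.zpowers (g ^ (p ^ (n - 2))) := by
      intro x hx
      obtain ⟨m, rfl⟩ := Subgroup.mem_zpowers_iff.1 (h x hx)
      obtain ⟨j, rfl⟩ := (hg m).1 hx
      rw [zpow_mul, zpow_natCast]
      exact Subgroup.zpow_mem _ (Subgroup.mem_zpowers _) _
    have h2 := Nat.le_of_dvd Nat.card_pos (Subgroup.card_dvd_of_le h1)
    have h3 : orderOf (g ^ (p ^ (n - 2))) ∣ p := by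
      apply orderOf_dvd_of_pow_eq_one
      rw [← pow_mul, ← pow_succ]
      have : n - 2 + 1 = n - 1 := by omega
      rw [this, ← hk, pow_orderOf_eq_one]
    rw [hb, Nat.card_zpowers] at h2
    have h4 := Nat.le_of_dvd hp.pos h3
    have := hp.two_le
    nlinarith
  have hxp : x ^ p ∈ H := by rw [← hHi]; exact H.pow_index_mem x
  obtain ⟨m, hm⟩ := Subgroup.mem_zpowers_iff.1 hxp
  obtain ⟨j, rfl⟩ := (hg m).1 (by rw [hm]; exact K.pow_mem hxK _)
  set c := (g ^ p ^ (n - 3)) ^ j with hcdef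
  have hcZ : c ∈ Subgroup.center G := Subgroup.zpow_mem _ (hgpc _ (by omega)) _
  have hcH : c ∈ H := Subgroup.zpow_mem _ (Subgroup.pow_mem _ (Subgroup.mem_zpowers g) _) _
  have hcp' : c ^ p = x ^ p := by
    rw [← hm, hcdef, hp2, ← zpow_natCast, ← zpow_natCast, ← zpow_mul, ← zpow_mul]
    congr 1
    push_cast; ring
  set h := x * c⁻¹ with hh
  have hhp : h ^ p = 1 := by
    have : Commute x c⁻¹ := (Subgroup.mem_center_iff.1 ((Subgroup.center G).inv_mem hcZ) x)
    rw [hh, this.mul_pow, inv_pow, hcp', mul_inv_cancel]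
  have hhH : h ∉ H := by
    intro h1
    apply hxH
    have := H.mul_mem h1 hcH
    simpa [hh] using this
  have hh1 : h ≠ 1 := fun h1 => hhH (h1 ▸ H.one_mem)
  have hho : orderOf h = p := orderOf_eq_prime hhp hh1 (hp := ⟨hp⟩)
  have hPc : Nat.card (Subgroup.zpowers h) = p := by rw [Nat.card_zpowers, hho]
  have hdisj : Disjoint H (Subgroup.zpowers h) := by
    rw [disjoint_iff]
    have hd := Subgroup.card_dvd_of_le (inf_le_right : H ⊓ Subgroup.zpowers h ≤ _)
    rw [hPc] at hd
    rcases (Nat.dvd_prime hp).1 hd with h1 | h1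
    · exact Subgroup.card_eq_one.1 h1
    · exfalso
      have := Subgroup.eq_of_le_of_card_ge (inf_le_right : H ⊓ Subgroup.zpowers h ≤ _)
        (by rw [h1, hPc])
      apply hhH
      have h2 : h ∈ H ⊓ Subgroup.zpowers h := by rw [this]; exact Subgroup.mem_zpowers h
      exact h2.1
  have hcomp : H.IsComplement' (Subgroup.zpowers h) := by
    apply Subgroup.isComplement'_of_card_mul_and_disjoint _ hdisj
    rw [hHcard, hPc, hcard, ← pow_succ]; congr 1; omega
  have e1 : H ≃* Multiplicative (ZMod (p ^ (n - 1))) :=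
    mulEquivOfCyclicCardEq (by rw [hHcard]; exact (Nat.card_zmod _).symm)
  have e2 : Subgroup.zpowers h ≃* Multiplicative (ZMod p) :=
    mulEquivOfCyclicCardEq (by rw [hPc]; exact (Nat.card_zmod _).symm)
  exact ⟨_, ⟨(SemidirectProduct.mulEquivSubgroup hcomp).symm.trans
    (SemidirectProduct.congr' e1 e2)⟩⟩
end

section
/- Let p be a prime and let G be a finite p-group of maximal class with |G| = p^n and cd(G) = {1, p, p^b} for some integer b ≥ 2. Then n ≥ 2b + 1, and every faithful irreducible complex character χ of G satisfies χ(1) = p^b and cod(χ) = p^{n-b}. -/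
open CategoryTheory

theorem aux_irr {G : Type} [Group G] (V : FDRep ℂ G) (hV : Simple V) :
    Nontrivial V ∧ ∀ W : Submodule ℂ V, (∀ g, ∀ v ∈ W, V.ρ g v ∈ W) → W = ⊥ ∨ W = ⊤ := by
  have hmain : ∀ W : Submodule ℂ V, (∀ g, ∀ v ∈ W, V.ρ g v ∈ W) → W = ⊥ ∨ W = ⊤ := by
    intro W hW
    by_cases hb : W = ⊥
    · exact Or.inl hb
    right
    let S : Subrepresentation V.ρ := ⟨W, fun g v hv => hW g v hv⟩
    let f : FDRep.of S.toRepresentation ⟶ V :=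
      ⟨InducedCategory.homMk (ModuleCat.ofHom W.subtype), fun g => by
        ext1
        rfl⟩
    have hinj : Function.Injective ((forget₂ (FDRep ℂ G) (FGModuleCat ℂ) ⋙ forget (FGModuleCat ℂ)).map f) := by
      intro a b hab
      exact Subtype.ext hab
    have hm : Mono f := by
      apply (forget₂ (FDRep ℂ G) (FGModuleCat ℂ) ⋙ forget (FGModuleCat ℂ)).mono_of_mono_map
      exact (mono_iff_injective _).2 hinj
    have hf : f ≠ 0 := by
      intro h0
      apply hb
      rw [Submodule.eq_bot_iff]
      intro x hx
      have := congrArg (fun φ : FDRep.of S.toRepresentation ⟶ V => φ.hom.hom.hom (⟨x, hx⟩ : W)) h0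
      exact this
    have hi : IsIso f := isIso_of_mono_of_nonzero hf
    rw [Submodule.eq_top_iff']
    intro v
    have hs := (FDRep.isoToLinearEquiv (asIso f)).apply_symm_apply v
    rw [← hs]
    exact ((FDRep.isoToLinearEquiv (asIso f)).symm v).2
  refine ⟨?_, hmain⟩
  by_contra hn
  rw [not_nontrivial_iff_subsingleton] at hn
  apply id_nonzero V
  apply Action.hom_ext
  ext x
  exact Subsingleton.elim _ _

section Aux

variable {G : Type} [Group G] {V : Type} [AddCommGroup V] [Module ℂ V] [FiniteDimensional ℂ V]

/-- Schur's lemma for an explicit irreducibility hypothesis. -/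
theorem aux_schur_s17 [Nontrivial V] (ρ : Representation ℂ G V)
    (hirr : ∀ W : Submodule ℂ V, (∀ g, ∀ v ∈ W, ρ g v ∈ W) → W = ⊥ ∨ W = ⊤)
    (f : V →ₗ[ℂ] V) (hf : ∀ g v, f (ρ g v) = ρ g (f v)) : ∃ c : ℂ, ∀ v, f v = c • v := by
  obtain ⟨c, hc⟩ := Module.End.exists_eigenvalue (K := ℂ) (V := V) f
  refine ⟨c, fun v => ?_⟩
  have h := hirr (Module.End.eigenspace f c) (by
    intro g v hv
    rw [Module.End.mem_eigenspace_iff] at hv ⊢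
    rw [hf, hv, map_smul])
  rcases h with h | h
  · exact absurd h hc
  · have : v ∈ Module.End.eigenspace f c := by rw [h]; trivial
    exact Module.End.mem_eigenspace_iff.1 this

theorem aux_center [Nontrivial V] (ρ : Representation ℂ G V)
    (hirr : ∀ W : Submodule ℂ V, (∀ g, ∀ v ∈ W, ρ g v ∈ W) → W = ⊥ ∨ W = ⊤)
    (z : G) (hz : z ∈ Subgroup.center G) : ∃ c : ℂ, ∀ v, ρ z v = c • v := by
  apply aux_schur_s17 ρ hirr
  intro g v
  rw [← Module.End.mul_apply, ← Module.End.mul_apply, ← map_mul, ← map_mul,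
    Subgroup.mem_center_iff.1 hz g]

/-- Burnside: `End V` is spanned by the image of the group. -/
theorem aux_burnside [Nontrivial V] (ρ : Representation ℂ G V)
    (hirr : ∀ W : Submodule ℂ V, (∀ g, ∀ v ∈ W, ρ g v ∈ W) → W = ⊥ ∨ W = ⊤) :
    Submodule.span ℂ (Set.range ρ) = ⊤ := by
  let A : Subalgebra ℂ (Module.End ℂ V) := Algebra.adjoin ℂ (Set.range ρ)
  have hA : Subalgebra.toSubmodule A = Submodule.span ℂ (Set.range ρ) := by
    have h1 : (Submonoid.closure (Set.range ρ) : Set (Module.End ℂ V)) = Set.range ρ := by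
      have : Set.range ρ = ((MonoidHom.mrange ρ : Submonoid (Module.End ℂ V)) : Set _) :=
        (MonoidHom.coe_mrange ρ).symm
      rw [this, Submonoid.closure_eq]
    rw [Algebra.adjoin_eq_span, h1]
  have hmem : ∀ g, ρ g ∈ A := fun g => Algebra.subset_adjoin ⟨g, rfl⟩
  have hS : IsSimpleModule A V :=
    { exists_pair_ne := ⟨⊥, ⊤, bot_ne_top⟩
      eq_bot_or_eq_top := fun S => by
        rcases hirr (S.restrictScalars ℂ)
          (fun g v hv => S.smul_mem (⟨ρ g, hmem g⟩ : A) hv) with h | h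
        · left
          exact (Submodule.restrictScalars_eq_bot_iff ..).1 h
        · right
          exact (Submodule.restrictScalars_eq_top_iff ..).1 h }
  have hsc : ∀ e : Module.End A V, ∃ c : ℂ, ∀ v : V, e v = c • v := by
    intro e
    apply aux_schur_s17 ρ hirr (e.restrictScalars ℂ)
    intro g v
    exact e.map_smul (⟨ρ g, hmem g⟩ : A) v
  rw [← hA, Submodule.eq_top_iff']
  intro f
  let F : Module.End (Module.End A V) V :=
    { toFun := fun v => f v
      map_add' := fun a b => f.map_add a b
      map_smul' := fun e a => by
        obtain ⟨c, hc⟩ := hsc e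
        rw [RingHom.id_apply, Module.End.smul_def, Module.End.smul_def, hc, hc, map_smul] }
  let b := Module.finBasis ℂ V
  obtain ⟨r, hr⟩ := jacobson_density F (Finset.univ.map ⟨b, b.injective⟩)
  have hfr : f = r := by
    apply b.ext
    intro i
    exact hr (b i) (by simp)
  rw [hfr]
  exact r.2

theorem aux_sq_le [Finite G] [Nontrivial V] (ρ : Representation ℂ G V)
    (hirr : ∀ W : Submodule ℂ V, (∀ g, ∀ v ∈ W, ρ g v ∈ W) → W = ⊥ ∨ W = ⊤) :
    Module.finrank ℂ V ^ 2 ≤ (Subgroup.center G).index := by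
  classical
  have : Fintype (G ⧸ Subgroup.center G) := Fintype.ofFinite _
  have h := aux_burnside ρ hirr
  have h2 : Submodule.span ℂ (Set.range fun q : G ⧸ Subgroup.center G => ρ q.out) = ⊤ := by
    rw [eq_top_iff, ← h, Submodule.span_le]
    rintro _ ⟨g, rfl⟩
    have hz := QuotientGroup.mk_out_eq_mul (Subgroup.center G) g
    obtain ⟨z, hz⟩ := hz
    obtain ⟨c, hc⟩ := aux_center ρ hirr (z : G)⁻¹ (inv_mem z.2)
    have : ρ g = c • ρ (g : G ⧸ Subgroup.center G).out := by
      ext v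
      have : g = (g : G ⧸ Subgroup.center G).out * (z : G)⁻¹ := by rw [hz]; group
      conv_lhs => rw [this, map_mul, Module.End.mul_apply, hc, map_smul]
      rfl
    rw [SetLike.mem_coe, this]
    exact Submodule.smul_mem _ _ (Submodule.subset_span ⟨_, rfl⟩)
  have h3 := finrank_range_le_card (R := ℂ) (fun q : G ⧸ Subgroup.center G => ρ q.out)
  rw [Set.finrank, h2, finrank_top, Module.finrank_linearMap, ← Nat.card_eq_fintype_card] at h3
  rw [sq]
  exact h3

/-- A commuting subgroup has a common eigenvector. -/
theorem aux_common [Nontrivial V] (ρ : Representation ℂ G V) (H : Subgroup G)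
    (hH : ∀ a ∈ H, ∀ b ∈ H, a * b = b * a) :
    ∃ v : V, v ≠ 0 ∧ ∀ h ∈ H, ∃ c : ℂ, ρ h v = c • v := by
  let P : ℕ → Prop := fun n => ∃ W : Submodule ℂ V, W ≠ ⊥ ∧ (∀ h ∈ H, ∀ v ∈ W, ρ h v ∈ W) ∧
    Module.finrank ℂ W = n
  have hP : ∃ n, P n := ⟨_, ⊤, top_ne_bot, fun _ _ _ _ => trivial, rfl⟩
  classical
  obtain ⟨W, hW0, hWi, hWn⟩ := Nat.find_spec hP
  obtain ⟨v, hv, hv0⟩ := Submodule.exists_mem_ne_zero_of_ne_bot hW0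
  refine ⟨v, hv0, fun h hh => ?_⟩
  have : Nontrivial W := Submodule.nontrivial_iff_ne_bot.2 hW0
  obtain ⟨c, hc⟩ := Module.End.exists_eigenvalue (K := ℂ) ((ρ h).restrict (hWi h hh))
  obtain ⟨w, hw⟩ := hc.exists_hasEigenvector
  refine ⟨c, ?_⟩
  let E : Submodule ℂ V := W ⊓ Module.End.eigenspace (ρ h) c
  have hE0 : E ≠ ⊥ := by
    intro h0
    have : (w : V) ∈ E := by
      refine ⟨w.2, ?_⟩
      rw [SetLike.mem_coe, Module.End.mem_eigenspace_iff]
      exact congrArg Subtype.val hw.apply_eq_smul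
    rw [h0, Submodule.mem_bot] at this
    exact hw.2 (Subtype.ext this)
  have hEi : ∀ k ∈ H, ∀ v ∈ E, ρ k v ∈ E := by
    rintro k hk u ⟨hu1, hu2⟩
    refine ⟨hWi k hk u hu1, ?_⟩
    rw [SetLike.mem_coe, Module.End.mem_eigenspace_iff] at hu2 ⊢
    rw [← Module.End.mul_apply, ← map_mul, hH h hh k hk, map_mul, Module.End.mul_apply, hu2,
      map_smul]
  have hmin := Nat.find_min' hP ⟨E, hE0, hEi, rfl⟩
  have hEW : E = W := Submodule.eq_of_le_of_finrank_le inf_le_left (by rw [hWn]; exact hmin)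
  rw [← hEW] at hv
  exact Module.End.mem_eigenspace_iff.1 hv.2

theorem aux_abelian_index [Finite G] [Nontrivial V] (ρ : Representation ℂ G V)
    (hirr : ∀ W : Submodule ℂ V, (∀ g, ∀ v ∈ W, ρ g v ∈ W) → W = ⊥ ∨ W = ⊤) (H : Subgroup G)
    (hH : ∀ a ∈ H, ∀ b ∈ H, a * b = b * a) : Module.finrank ℂ V ≤ H.index := by
  classical
  have : Fintype (G ⧸ H) := Fintype.ofFinite _
  obtain ⟨v, hv0, hv⟩ := aux_common ρ H hH
  have hin : ∀ g, ρ g v ∈ Submodule.span ℂ (Set.range fun q : G ⧸ H => ρ q.out v) := by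
    intro g
    obtain ⟨z, hz⟩ := QuotientGroup.mk_out_eq_mul H g
    obtain ⟨c, hc⟩ := hv (z : G)⁻¹ (inv_mem z.2)
    have h1 : ρ g v = c • ρ (g : G ⧸ H).out v := by
      have : g = (g : G ⧸ H).out * (z : G)⁻¹ := by rw [hz]; group
      conv_lhs => rw [this, map_mul, Module.End.mul_apply, hc, map_smul]
    rw [h1]
    exact Submodule.smul_mem _ _ (Submodule.subset_span ⟨_, rfl⟩)
  have h2 : Submodule.span ℂ (Set.range fun q : G ⧸ H => ρ q.out v) = ⊤ := by
    rcases hirr (Submodule.span ℂ (Set.range fun q : G ⧸ H => ρ q.out v)) (by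
      intro g u hu
      induction hu using Submodule.span_induction with
      | mem x hx =>
        obtain ⟨q, rfl⟩ := hx
        simp only
        rw [← Module.End.mul_apply, ← map_mul]
        exact hin _
      | zero => rw [map_zero]; exact zero_mem _
      | add a b _ _ ha hb => rw [map_add]; exact add_mem ha hb
      | smul c a _ ha => rw [map_smul]; exact Submodule.smul_mem _ _ ha) with h | h
    · have := hin 1
      rw [h, Submodule.mem_bot, map_one, Module.End.one_apply] at this
      exact absurd this hv0
    · exact h
  have h3 := finrank_range_le_card (R := ℂ) (fun q : G ⧸ H => ρ q.out v)
  rw [Set.finrank, h2, finrank_top, ← Nat.card_eq_fintype_card] at h3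
  exact h3

end Aux

/-- A nonabelian `p`-group has a noncentral element all of whose commutators are central. -/
theorem aux_second {G : Type} [Group G] [Finite G] (p : ℕ) [Fact p.Prime] (hG : IsPGroup p G)
    (hne : Subgroup.center G ≠ ⊤) :
    ∃ x : G, x ∉ Subgroup.center G ∧ ∀ g : G, g⁻¹ * x * g * x⁻¹ ∈ Subgroup.center G := by
  have hq : IsPGroup p (G ⧸ Subgroup.center G) := hG.to_quotient _
  have : Nontrivial (G ⧸ Subgroup.center G) := by
    rw [QuotientGroup.nontrivial_iff]
    exact hne
  have hc := hq.center_nontrivial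
  obtain ⟨y, hy⟩ := exists_ne (1 : Subgroup.center (G ⧸ Subgroup.center G))
  obtain ⟨x, hx⟩ := QuotientGroup.mk_surjective (y : G ⧸ Subgroup.center G)
  refine ⟨x, fun h => hy ?_, fun g => ?_⟩
  · apply Subtype.ext
    rw [← hx, (QuotientGroup.eq_one_iff x).2 h]
    rfl
  · rw [← QuotientGroup.eq_one_iff]
    have := Subgroup.mem_center_iff.1 y.2 (g : G ⧸ Subgroup.center G)
    rw [← hx] at this
    rw [QuotientGroup.mk_mul, QuotientGroup.mk_mul, QuotientGroup.mk_mul, mul_assoc _ (x : G ⧸ Subgroup.center G),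
      ← this, QuotientGroup.mk_inv, QuotientGroup.mk_inv]
    group

/-- A faithful irreducible representation of prime degree `p` of a `p`-group yields an abelian
subgroup of index at most `p`. -/
theorem aux_prime_degree {G : Type} [Group G] [Finite G] {V : Type} [AddCommGroup V]
    [Module ℂ V] [FiniteDimensional ℂ V] [Nontrivial V] (ρ : Representation ℂ G V)
    (hirr : ∀ W : Submodule ℂ V, (∀ g, ∀ v ∈ W, ρ g v ∈ W) → W = ⊥ ∨ W = ⊤)
    (hfaith : Function.Injective ρ) (p : ℕ) (hp : p.Prime) (hG : IsPGroup p G)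
    (hne : Subgroup.center G ≠ ⊤) (hdim : Module.finrank ℂ V = p) :
    ∃ H : Subgroup G, (∀ a ∈ H, ∀ b ∈ H, a * b = b * a) ∧ H.index ≤ p := by
  classical
  have : Fact p.Prime := ⟨hp⟩
  have : Fintype G := Fintype.ofFinite G
  obtain ⟨x, hxc, hx⟩ := aux_second p hG hne
  have hinv : ∀ g v, ρ g⁻¹ (ρ g v) = v := fun g v => by
    rw [← Module.End.mul_apply, ← map_mul, inv_mul_cancel, map_one, Module.End.one_apply]
  have hinj : ∀ g, Function.Injective (ρ g) := fun g => Function.LeftInverse.injective (hinv g)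
  have hc : ∀ g, ∃ c : ℂ, ∀ v, ρ x (ρ g v) = c • ρ g (ρ x v) := by
    intro g
    obtain ⟨c, hc⟩ := aux_center ρ hirr _ (hx g)
    refine ⟨c, fun v => ?_⟩
    rw [← map_smul, ← hc]
    simp only [← Module.End.mul_apply, ← map_mul]
    congr 2
    group
  choose c hc using hc
  obtain ⟨l, hl⟩ := Module.End.exists_eigenvalue (K := ℂ) (V := V) (ρ x)
  let E : ℂ → Submodule ℂ V := fun μ => Module.End.eigenspace (ρ x) μ
  have hmap : ∀ g μ v, v ∈ E μ → ρ g v ∈ E (c g * μ) := by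
    intro g μ v hv
    rw [Module.End.mem_eigenspace_iff] at hv ⊢
    rw [hc, hv, map_smul, smul_smul]
  have hcm : ∀ g h, c (g * h) = c g * c h := by
    intro g h
    obtain ⟨v, hv⟩ := exists_ne (0 : V)
    have h1 := hc (g * h) v
    rw [map_mul, Module.End.mul_apply, Module.End.mul_apply, hc g, hc h, map_smul, smul_smul] at h1
    refine (smul_left_injective ℂ (m := ρ g (ρ h (ρ x v))) ?_ h1).symm
    intro h0
    apply hv
    apply hinj x; apply hinj h; apply hinj g
    rw [h0, map_zero, map_zero, map_zero]
  have hc1 : c 1 = 1 := by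
    obtain ⟨v, hv⟩ := exists_ne (0 : V)
    have h1 := hc 1 v
    rw [map_one, Module.End.one_apply, Module.End.one_apply] at h1
    have h2 : (1 : ℂ) • ρ x v = c 1 • ρ x v := by rw [one_smul]; exact h1
    refine (smul_left_injective ℂ (m := ρ x v) ?_ h2).symm
    intro h0
    apply hv
    apply hinj x
    rw [h0, map_zero]
  have hl0 : l ≠ 0 := by
    rintro rfl
    obtain ⟨w, hw⟩ := hl.exists_hasEigenvector
    apply hw.2
    apply hinj x
    rw [hw.apply_eq_smul, zero_smul, map_zero]
  let S : Finset ℂ := Finset.univ.image fun g => c g * l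
  have hSmem : ∀ g, c g * l ∈ S := fun g => Finset.mem_image_of_mem _ (Finset.mem_univ g)
  have hlS : l ∈ S := by
    have := hSmem 1
    rwa [hc1, one_mul] at this
  have hle : ∀ g μ, Module.finrank ℂ (E μ) ≤ Module.finrank ℂ (E (c g * μ)) := by
    intro g μ
    refine LinearMap.finrank_le_finrank_of_injective
      (f := (ρ g).restrict (hmap g μ)) ?_
    intro a b hab
    exact Subtype.ext (hinj g (congrArg Subtype.val hab))
  have hd : ∀ μ ∈ S, Module.finrank ℂ (E μ) = Module.finrank ℂ (E l) := by
    intro μ hμ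
    obtain ⟨g, -, rfl⟩ := Finset.mem_image.1 hμ
    apply le_antisymm
    · have := hle g⁻¹ (c g * l)
      rwa [← mul_assoc, ← hcm, inv_mul_cancel, hc1, one_mul] at this
    · exact hle g l
  have htop : (⨆ μ : S, E μ) = ⊤ := by
    rcases hirr (⨆ μ : S, E μ) (by
      intro g v hv
      have hle : (⨆ μ : S, E μ) ≤ (⨆ μ : S, E μ).comap (ρ g) := by
        apply iSup_le
        rintro ⟨μ, hμ⟩ u hu
        obtain ⟨k, -, rfl⟩ := Finset.mem_image.1 hμ
        have h1 := hmap g _ u hu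
        rw [← mul_assoc, ← hcm] at h1
        exact Submodule.mem_iSup_of_mem (⟨_, hSmem (g * k)⟩ : S) h1
      exact hle hv) with h | h
    · exfalso
      apply hl
      rw [eq_bot_iff]
      refine le_trans ?_ h.le
      exact le_iSup (fun μ : S => E μ) ⟨l, hlS⟩
    · exact h
  have hinternal : DirectSum.IsInternal (fun μ : S => E μ) :=
    DirectSum.isInternal_submodule_of_iSupIndep_of_iSup_eq_top
      ((Module.End.eigenspaces_iSupIndep (ρ x)).comp Subtype.val_injective) htop
  have hsum : p = S.card * Module.finrank ℂ (E l) := by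
    rw [← hdim, ← (LinearEquiv.ofBijective (DirectSum.coeLinearMap fun μ : S => E μ) hinternal).finrank_eq, Module.finrank_directSum,
      Finset.sum_congr rfl (fun μ _ => hd μ.1 μ.2)]
    simp
  have hd1 : Module.finrank ℂ (E l) = 1 := by
    rcases (Nat.dvd_prime hp).1 ⟨_, (hsum.trans (mul_comm _ _))⟩ with h | h
    · exact h
    · exfalso
      have hEt : E l = ⊤ := Submodule.eq_top_of_finrank_eq (h.trans hdim.symm)
      apply hxc
      rw [Subgroup.mem_center_iff]
      intro g
      apply hfaith
      ext v
      have hs : ∀ u, ρ x u = l • u := fun u =>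
        Module.End.mem_eigenspace_iff.1 (show u ∈ E l by rw [hEt]; trivial)
      rw [map_mul, map_mul, Module.End.mul_apply, Module.End.mul_apply, hs, hs, map_smul]
  have hScard : S.card = p := by rw [hsum, hd1, mul_one]
  let φ : G →* ℂ := ⟨⟨c, hc1⟩, hcm⟩
  refine ⟨φ.ker, ?_, ?_⟩
  · intro a ha b hb
    have ha' : c a = 1 := ha
    have hb' : c b = 1 := hb
    have hdiag : ∀ g, c g = 1 → ∀ μ ∈ S, ∃ t : ℂ, ∀ v ∈ E μ, ρ g v = t • v := by
      intro g hg μ hμ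
      have h1 := (hd μ hμ).trans hd1
      obtain ⟨w, hw0, hw⟩ := finrank_eq_one_iff'.1 h1
      have h2 := hmap g μ w w.2
      rw [hg, one_mul] at h2
      obtain ⟨t, ht⟩ := hw ⟨_, h2⟩
      have ht' : t • (w : V) = ρ g w := congrArg Subtype.val ht
      refine ⟨t, fun v hv => ?_⟩
      obtain ⟨s, hs⟩ := hw ⟨v, hv⟩
      have hs' : s • (w : V) = v := congrArg Subtype.val hs
      rw [← hs', map_smul, ← ht', smul_comm]
    apply hfaith
    have hall : (⨆ μ : S, E μ) ≤ LinearMap.eqLocus (ρ (a * b)) (ρ (b * a)) := by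
      apply iSup_le
      rintro ⟨μ, hμ⟩ v hv
      obtain ⟨t, ht⟩ := hdiag a ha' μ hμ
      obtain ⟨s, hs⟩ := hdiag b hb' μ hμ
      rw [LinearMap.mem_eqLocus, map_mul, map_mul, Module.End.mul_apply, Module.End.mul_apply,
        ht v hv, hs v hv, map_smul, map_smul, ht v hv, hs v hv, smul_comm]
    ext v
    have : v ∈ (⨆ μ : S, E μ) := by rw [htop]; trivial
    exact hall this
  · have hcard : Nat.card S = p := by rw [← hScard]; simp
    rw [← hcard, Subgroup.index]
    refine Nat.card_le_card_of_injective
      (fun q : G ⧸ φ.ker => (⟨c q.out * l, hSmem _⟩ : S)) ?_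
    intro q r hqr
    have h1 : c q.out = c r.out := mul_right_cancel₀ hl0 (congrArg Subtype.val hqr)
    rw [← QuotientGroup.out_eq' q, ← QuotientGroup.out_eq' r, QuotientGroup.eq]
    change c (q.out⁻¹ * r.out) = 1
    rw [hcm, ← h1, ← hcm, inv_mul_cancel, hc1]

/-- A maximal class `p`-group of order `p^n` with `cd(G) = {1, p, p^b}`, `b ≥ 2`, satisfies
`n ≥ 2b + 1`, and every faithful irreducible character has degree `p^b` and codegree
`p^{n-b}`. -/
theorem maximal_class_three_degrees_faithful (p n b : ℕ) (hp : p.Prime) (G : Type) [Group G]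
    [Fintype G] (hcard : Fintype.card G = p ^ n) (hb : 2 ≤ b) (hmax : nilClass G = n - 1)
    (hcd : cdSet G = {1, p, p ^ b}) :
    2 * b + 1 ≤ n ∧ ∀ V : FDRep ℂ G, Simple V → repKer V = ⊥ →
      repDegree V = p ^ b ∧ codegree V = p ^ (n - b) := by
  have hfact : Fact p.Prime := ⟨hp⟩
  have hcardN : Nat.card G = p ^ n := by rw [Nat.card_eq_fintype_card, hcard]
  have hpg : IsPGroup p G := IsPGroup.of_card hcardN
  have hbmem : p ^ b ∈ cdSet G := by rw [hcd]; simp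
  obtain ⟨U, hU, hUd⟩ := hbmem
  obtain ⟨hUn, hUirr⟩ := aux_irr U hU
  have hsq := aux_sq_le U.ρ hUirr
  have hUd' : Module.finrank ℂ U = p ^ b := hUd
  have hpb : p < p ^ b := by
    calc p = p ^ 1 := (pow_one p).symm
      _ < p ^ b := Nat.pow_lt_pow_right hp.one_lt (by omega)
  rw [hUd'] at hsq
  have hnt : Nontrivial G := by
    by_contra h
    rw [not_nontrivial_iff_subsingleton] at h
    have h1 := aux_abelian_index U.ρ hUirr ⊤ (fun a _ b _ => Subsingleton.elim _ _)
    rw [hUd', Subgroup.index_top] at h1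
    have := hp.one_lt
    omega
  have hZ : p ≤ Nat.card (Subgroup.center G) := by
    have h1 := hpg.center_nontrivial
    have h2 : 1 < Nat.card (Subgroup.center G) := Finite.one_lt_card
    obtain ⟨k, hk⟩ := (IsPGroup.iff_card (p := p)).1 (hpg.to_subgroup (Subgroup.center G))
    rw [hk] at h2 ⊢
    have hk0 : k ≠ 0 := by rintro rfl; simp at h2
    exact Nat.le_self_pow hk0 p
  have hn : 2 * b + 1 ≤ n := by
    have h1 := (Subgroup.center G).card_mul_index
    rw [hcardN] at h1
    have h2 : p ^ (2 * b + 1) ≤ p ^ n := by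
      rw [← h1, pow_succ, mul_comm, mul_comm 2 b, pow_mul]
      exact Nat.mul_le_mul hZ hsq
    exact (Nat.pow_le_pow_iff_right hp.one_lt).1 h2
  refine ⟨hn, fun V hV hker => ?_⟩
  obtain ⟨hVn, hVirr⟩ := aux_irr V hV
  have hfaith : Function.Injective V.ρ := by
    have h1 : Function.Injective (Representation.asGroupHom V.ρ) :=
      (MonoidHom.ker_eq_bot_iff _).1 hker
    intro a b hab
    apply h1
    apply Units.ext
    rw [Representation.asGroupHom_apply, Representation.asGroupHom_apply, hab]
  have hnoab : ∀ H : Subgroup G, (∀ a ∈ H, ∀ b ∈ H, a * b = b * a) → p < H.index := by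
    intro H hH
    have := aux_abelian_index U.ρ hUirr H hH
    rw [hUd'] at this
    omega
  have hne : Subgroup.center G ≠ ⊤ := by
    intro h
    have h1 := hnoab (Subgroup.center G) (fun a _ b hb => Subgroup.mem_center_iff.1 hb a)
    rw [h, Subgroup.index_top] at h1
    have := hp.one_lt
    omega
  have hdeg : repDegree V = p ^ b := by
    have hmem : repDegree V ∈ cdSet G := ⟨V, hV, rfl⟩
    rw [hcd] at hmem
    rcases hmem with h | h | h
    · exfalso
      apply hne
      have h' : Module.finrank ℂ V = 1 := h
      rw [Subgroup.eq_top_iff']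
      intro x
      rw [Subgroup.mem_center_iff]
      intro g
      apply hfaith
      obtain ⟨w, hw0, hw⟩ := finrank_eq_one_iff'.1 h'
      have hs : ∀ y, ∃ t : ℂ, ∀ v, V.ρ y v = t • v := by
        intro y
        obtain ⟨t, ht⟩ := hw (V.ρ y w)
        refine ⟨t, fun v => ?_⟩
        obtain ⟨s, rfl⟩ := hw v
        rw [map_smul, ← ht, smul_comm]
      obtain ⟨t, ht⟩ := hs x
      rw [map_mul, map_mul]
      apply LinearMap.ext
      intro v
      rw [Module.End.mul_apply, Module.End.mul_apply, ht, ht, map_smul]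
    · exfalso
      obtain ⟨H, hH, hi⟩ := aux_prime_degree V.ρ hVirr hfaith p hp hpg hne h
      exact absurd hi (not_le.2 (hnoab H hH))
    · exact h
  refine ⟨hdeg, ?_⟩
  rw [codegree, hker, Subgroup.index_bot, hcardN, hdeg, Nat.pow_div (by omega) hp.pos]
end

section
/- Let p be a prime and let G be a finite p-group of maximal class with |G| = p^n ≥ p^3. If p^{n-1} ∈ cod(G), then cd(G) = {1, p}; equivalently, if cd(G) ≠ {1, p}, then every irreducible complex character of G has codegree at most p^{n-2}. -/
open CategoryTheory

namespace MaxClassAux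

set_option linter.style.haveILetI false
set_option linter.unusedSimpArgs false
set_option linter.unusedSectionVars false
set_option linter.unusedVariables false

/-- Irreducibility, concretely. -/
def Irr {G V : Type} [Group G] [AddCommGroup V] [Module ℂ V] (ρ : G →* Module.End ℂ V) : Prop :=
  Nontrivial V ∧ ∀ W : Submodule ℂ V, (∀ g, ∀ v ∈ W, ρ g v ∈ W) → W = ⊥ ∨ W = ⊤

/-- Weight space of a subgroup. -/
def wt {G V : Type} [Group G] [AddCommGroup V] [Module ℂ V] (ρ : G →* Module.End ℂ V)
    (A : Subgroup G) (χ : A → ℂ) : Submodule ℂ V := ⨅ a : A, (ρ a).eigenspace (χ a)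

section
variable {G V : Type} [Group G] [Finite G] [AddCommGroup V] [Module ℂ V]
  [FiniteDimensional ℂ V] (ρ : G →* Module.End ℂ V) (A : Subgroup G)

lemma mem_wt {χ : A → ℂ} {v : V} : v ∈ wt ρ A χ ↔ ∀ a : A, ρ a v = χ a • v := by
  simp [wt, Module.End.mem_eigenspace_iff]

lemma semisimple_rho (g : G) : (ρ g).IsSemisimple := by
  have hpos : 0 < Nat.card G := Nat.card_pos
  apply Module.End.isSemisimple_of_squarefree_aeval_eq_zero
    (p := (Polynomial.X ^ (Nat.card G) - 1 : Polynomial ℂ))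
  · have : (Polynomial.X ^ (Nat.card G) - Polynomial.C 1 : Polynomial ℂ).Separable :=
      Polynomial.separable_X_pow_sub_C 1 (by exact_mod_cast hpos.ne') one_ne_zero
    simpa using this.squarefree
  · rw [map_sub, map_pow, Polynomial.aeval_X, ← map_pow, pow_card_eq_one']; simp

lemma wt_eq (χ : A → ℂ) : wt ρ A χ = ⨅ a : A, (ρ a).maxGenEigenspace (χ a) := by
  unfold wt
  congr 1
  ext1 a
  rw [(semisimple_rho ρ a).isFinitelySemisimple.maxGenEigenspace_eq_eigenspace]

lemma wt_top (hA : ∀ a b : A, Commute (ρ a) (ρ b)) : ⨆ χ, wt ρ A χ = ⊤ := by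
  simp_rw [wt_eq]
  exact Module.End.iSup_iInf_maxGenEigenspace_eq_top_of_iSup_maxGenEigenspace_eq_top_of_commute
    (fun a : A => ρ a) (fun a b _ => hA a b) (fun a => Module.End.iSup_maxGenEigenspace_eq_top _)

lemma wt_indep (hA : ∀ a b : A, Commute (ρ a) (ρ b)) : iSupIndep (wt ρ A) := by
  have : wt ρ A = fun χ => ⨅ a : A, (ρ a).maxGenEigenspace (χ a) := by
    ext1 χ; exact wt_eq ρ A χ
  rw [this]
  exact Module.End.independent_iInf_maxGenEigenspace_of_forall_mapsTo (fun a : A => ρ a)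
    (fun a b => Module.End.mapsTo_maxGenEigenspace_of_comm (hA b a))

lemma exists_wt (hA : ∀ a b : A, Commute (ρ a) (ρ b)) [Nontrivial V] : ∃ χ, wt ρ A χ ≠ ⊥ := by
  by_contra! h
  have := wt_top ρ A hA
  simp [h] at this

lemma finrank_le_index' (hA : ∀ a b : A, Commute (ρ a) (ρ b)) [A.FiniteIndex] (h : Irr ρ) (χ : A → ℂ) (hχ : wt ρ A χ ≠ ⊥) :
    Module.finrank ℂ V ≤ A.index := by
  classical
  obtain ⟨v, hv, hv0⟩ := (Submodule.ne_bot_iff _).1 hχ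
  rw [mem_wt] at hv
  haveI : Fintype (G ⧸ A) := Fintype.ofFinite _
  let b : G ⧸ A → V := fun q => ρ q.out v
  have key : ∀ g : G, ∃ c : ℂ, ρ g v = c • b (g : G ⧸ A) := by
    intro g
    obtain ⟨a, ha⟩ := QuotientGroup.mk_out_eq_mul A g
    have hg : g = (g : G ⧸ A).out * (a⁻¹ : A) := by rw [ha]; simp
    refine ⟨χ a⁻¹, ?_⟩
    conv_lhs => rw [hg, map_mul]
    rw [Module.End.mul_apply, hv, map_smul]
  have hW : Submodule.span ℂ (Set.range b) = ⊤ := by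
    refine (h.2 (Submodule.span ℂ (Set.range b)) ?_).resolve_left ?_
    · intro g w hw
      induction hw using Submodule.span_induction with
      | mem x hx =>
        obtain ⟨q, rfl⟩ := hx
        obtain ⟨c, hc⟩ := key (g * q.out)
        have : ρ g (b q) = c • b ((g * q.out : G) : G ⧸ A) := by
          rw [← hc, map_mul]; rfl
        rw [this]
        exact Submodule.smul_mem _ _ (Submodule.subset_span ⟨_, rfl⟩)
      | zero => simp
      | add x y _ _ hx hy => rw [map_add]; exact add_mem hx hy
      | smul c x _ hx => rw [map_smul]; exact Submodule.smul_mem _ _ hx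
    · intro hbot
      obtain ⟨c, hc⟩ := key 1
      apply hv0
      have : v = c • b ((1 : G) : G ⧸ A) := by rw [← hc]; simp
      rw [← Submodule.mem_bot ℂ, ← hbot, this]
      exact Submodule.smul_mem _ _ (Submodule.subset_span ⟨_, rfl⟩)
  rw [← finrank_top ℂ V, ← hW]
  refine (finrank_range_le_card b).trans ?_
  rw [Subgroup.index, Nat.card_eq_fintype_card]

lemma finrank_le_index (hA : ∀ a b : A, Commute (ρ a) (ρ b)) (h : Irr ρ) : Module.finrank ℂ V ≤ A.index := by
  haveI := h.1
  obtain ⟨χ, hχ⟩ := exists_wt ρ A hA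
  exact finrank_le_index' ρ A hA h χ hχ

end

/-- Conjugation action on weights. -/
@[reducible] def wtAct {G : Type} [Group G] (A : Subgroup G) [A.Normal] : MulAction G (A → ℂ) where
  smul g χ := fun a => χ (MulAut.conjNormal g⁻¹ a)
  one_smul χ := by
    funext a
    change χ _ = χ a
    simp
  mul_smul g h χ := by
    funext a
    change χ _ = χ _
    simp

section
variable {G V : Type} [Group G] [Finite G] [AddCommGroup V] [Module ℂ V]
  [FiniteDimensional ℂ V] (ρ : G →* Module.End ℂ V) (A : Subgroup G) [A.Normal]

lemma rho_mem_wt (g : G) (χ : A → ℂ) (v : V) (hv : v ∈ wt ρ A χ) :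
    ρ g v ∈ wt ρ A ((wtAct A).smul g χ) := by
  rw [mem_wt] at hv ⊢
  intro a
  have h1 : (a : G) * g = g * (MulAut.conjNormal g⁻¹ a : A) := by
    simp [MulAut.conjNormal_apply, mul_assoc]
  change ρ a (ρ g v) = χ (MulAut.conjNormal g⁻¹ a) • _
  rw [← Module.End.mul_apply, ← map_mul, h1, map_mul, Module.End.mul_apply, hv, map_smul]

lemma rho_inv_apply (g : G) (v : V) : ρ g⁻¹ (ρ g v) = v := by
  rw [← Module.End.mul_apply, ← map_mul]; simp

lemma wt_smul_map (g : G) (χ : A → ℂ) :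
    wt ρ A ((wtAct A).smul g χ) = (wt ρ A χ).map (ρ g) := by
  letI := wtAct A
  apply le_antisymm
  · intro v hv
    refine ⟨ρ g⁻¹ v, ?_, ?_⟩
    · have := rho_mem_wt ρ A g⁻¹ _ v hv
      have h2 : (wtAct A).smul g⁻¹ ((wtAct A).smul g χ) = χ := inv_smul_smul g χ
      rwa [h2] at this
    · have := rho_inv_apply ρ g⁻¹ v
      rwa [inv_inv] at this
  · rintro _ ⟨v, hv, rfl⟩
    exact rho_mem_wt ρ A g χ v hv

lemma rho_inj (g : G) : Function.Injective (ρ g) :=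
  Function.LeftInverse.injective (rho_inv_apply ρ g)

lemma finite_wts (hA : ∀ a b : A, Commute (ρ a) (ρ b)) : Finite {χ // wt ρ A χ ≠ ⊥} := by
  exact WellFoundedGT.finite_ne_bot_of_iSupIndep (wt_indep ρ A hA)

/-- Orbit bound. -/
lemma orbit_bound (hA : ∀ a b : A, Commute (ρ a) (ρ b)) (χ : A → ℂ) (hχ : wt ρ A χ ≠ ⊥) :
    letI := wtAct A
    Finite (MulAction.orbit G χ) ∧
    Nat.card (MulAction.orbit G χ) * Module.finrank ℂ (wt ρ A χ) ≤ Module.finrank ℂ V := by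
  classical
  letI := wtAct A
  have hf : Finite (MulAction.orbit G χ) := Finite.of_surjective
    (fun g : G => (⟨g • χ, g, rfl⟩ : MulAction.orbit G χ)) (by rintro ⟨_, g, rfl⟩; exact ⟨g, rfl⟩)
  refine ⟨hf, ?_⟩
  haveI := Fintype.ofFinite (MulAction.orbit G χ)
  have hi : iSupIndep (fun i : MulAction.orbit G χ => wt ρ A i) :=
    (wt_indep ρ A hA).comp Subtype.val_injective
  have hinj := hi.dfinsupp_lsum_injective
  have := LinearMap.finrank_le_finrank_of_injective hinj
  have h2 : Module.finrank ℂ (Π₀ i : MulAction.orbit G χ, wt ρ A i) =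
      ∑ i : MulAction.orbit G χ, Module.finrank ℂ (wt ρ A i) :=
    Module.finrank_directSum (R := ℂ) (fun i : MulAction.orbit G χ => wt ρ A i)
  rw [h2] at this
  have h3 : ∀ i : MulAction.orbit G χ, Module.finrank ℂ (wt ρ A i) = Module.finrank ℂ (wt ρ A χ) := by
    rintro ⟨_, g, rfl⟩
    change Module.finrank ℂ (wt ρ A ((wtAct A).smul g χ)) = _
    rw [wt_smul_map]
    exact (Submodule.equivMapOfInjective (ρ g) (rho_inj ρ g) (wt ρ A χ)).finrank_eq.symm
  simpa [h3] using this

lemma commute_of_lt (hA : ∀ a b : A, Commute (ρ a) (ρ b)) {p : ℕ} [Fact p.Prime] (hG : IsPGroup p G) (hlt : Module.finrank ℂ V < p)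
    (g : G) (a : A) : Commute (ρ g) (ρ a) := by
  letI := wtAct A
  have key : ⨆ χ, wt ρ A χ ≤ LinearMap.ker (ρ g * ρ a - ρ a * ρ g) := by
    refine iSup_le fun χ => ?_
    by_cases hχ : wt ρ A χ = ⊥
    · rw [hχ]; exact bot_le
    · obtain ⟨hf, hb⟩ := orbit_bound ρ A hA χ hχ
      obtain ⟨k, hk⟩ := hG.card_orbit χ
      have hpos : 0 < Module.finrank ℂ (wt ρ A χ) := by
        haveI := Submodule.nontrivial_iff_ne_bot.2 hχ
        exact Module.finrank_pos
      have hk0 : k = 0 := by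
        by_contra hk0
        have : p ≤ p ^ k := Nat.le_self_pow hk0 p
        rw [← hk] at this
        have := Nat.le_mul_of_pos_right (Nat.card (MulAction.orbit G χ)) hpos
        omega
      rw [hk0, pow_zero] at hk
      have hfix : (wtAct A).smul g χ = χ := by
        have hs := (Nat.card_eq_one_iff_unique.1 hk).1
        exact congrArg Subtype.val (hs.elim ⟨g • χ, g, rfl⟩ ⟨χ, MulAction.mem_orbit_self χ⟩)
      intro v hv
      have h1 := rho_mem_wt ρ A g χ v hv
      rw [hfix, mem_wt] at h1
      rw [mem_wt] at hv
      simp [h1, hv]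
  rw [wt_top ρ A hA, top_le_iff, LinearMap.ker_eq_top, sub_eq_zero] at key
  exact key

end

lemma exists_abelian {G : Type} [Group G] [Finite G] {p : ℕ} [Fact p.Prime] (hG : IsPGroup p G)
    (hnc : ¬ ∀ a b : G, a * b = b * a) :
    ∃ A : Subgroup G, A.Normal ∧ (∀ a b : A, a * b = b * a) ∧ ¬ A ≤ Subgroup.center G := by
  have hnt : Nontrivial (G ⧸ Subgroup.center G) := by
    by_contra h
    rw [not_nontrivial_iff_subsingleton] at h
    replace h : Subgroup.center G = ⊤ := by
      rw [eq_top_iff]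
      intro x _
      exact (QuotientGroup.eq_one_iff x).1 (Subsingleton.elim _ _)
    apply hnc
    intro a b
    exact (Subgroup.mem_center_iff.1 (h ▸ Subgroup.mem_top a : a ∈ Subgroup.center G) b).symm
  haveI := (hG.to_quotient (Subgroup.center G)).center_nontrivial
  obtain ⟨⟨z, hz⟩, hz1⟩ := exists_ne (1 : Subgroup.center (G ⧸ Subgroup.center G))
  have hz1' : z ≠ 1 := fun h => hz1 (Subtype.ext h)
  have hle : Subgroup.zpowers z ≤ Subgroup.center (G ⧸ Subgroup.center G) := by
    rwa [Subgroup.zpowers_le]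
  have hN : (Subgroup.zpowers z).Normal := by
    constructor
    intro n hn g
    have := Subgroup.mem_center_iff.1 (hle hn) g
    rw [this]; simpa using hn
  refine ⟨(Subgroup.zpowers z).comap (QuotientGroup.mk' (Subgroup.center G)), hN.comap _, ?_, ?_⟩
  · let f := (QuotientGroup.mk' (Subgroup.center G)).subgroupComap (Subgroup.zpowers z)
    have hk : f.ker ≤ Subgroup.center _ := by
      intro x hx
      have hx' : ((x : G) : G ⧸ Subgroup.center G) = 1 := congrArg Subtype.val hx
      rw [QuotientGroup.eq_one_iff] at hx'
      rw [Subgroup.mem_center_iff]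
      intro y
      exact Subtype.ext (Subgroup.mem_center_iff.1 hx' y)
    exact fun a b => (f.isMulCommutative_of_isCyclic_of_ker_le_center hk).is_comm.comm a b
  · intro h
    obtain ⟨y, rfl⟩ := QuotientGroup.mk_surjective z
    apply hz1'
    rw [QuotientGroup.eq_one_iff]
    exact h (Subgroup.mem_zpowers _)

lemma commute_all {G V : Type} [Group G] [Finite G] [AddCommGroup V] [Module ℂ V]
    [FiniteDimensional ℂ V] (ρ : G →* Module.End ℂ V) {p : ℕ} [Fact p.Prime] (hG : IsPGroup p G)
    (hlt : Module.finrank ℂ V < p) (g h : G) : Commute (ρ g) (ρ h) := by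
  let f := ρ.toHomUnits
  let Q := f.range
  let σ : Q →* Module.End ℂ V := (Units.coeHom _).comp Q.subtype
  have hσ : Function.Injective σ := fun a b hab => Subtype.ext (Units.ext hab)
  have hQ : IsPGroup p Q := hG.of_surjective f.rangeRestrict f.rangeRestrict_surjective
  have hfin : Finite Q := Finite.of_surjective f.rangeRestrict f.rangeRestrict_surjective
  have hc : ∀ a b : Q, a * b = b * a := by
    by_contra hnc
    obtain ⟨A, hN, hA, hAc⟩ := exists_abelian hQ hnc
    apply hAc
    intro a ha
    rw [Subgroup.mem_center_iff]
    intro b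
    apply hσ
    rw [map_mul, map_mul]
    refine commute_of_lt σ A ?_ hQ hlt b ⟨a, ha⟩
    intro x y
    change σ x * σ y = σ y * σ x
    rw [← map_mul, ← map_mul]
    exact congrArg σ (congrArg Subtype.val (hA x y))
  have := congrArg σ (hc (f.rangeRestrict g) (f.rangeRestrict h))
  rw [map_mul, map_mul] at this
  exact this

lemma finrank_one {G V : Type} [Group G] [Finite G] [AddCommGroup V] [Module ℂ V]
    [FiniteDimensional ℂ V] (ρ : G →* Module.End ℂ V) {p : ℕ} [Fact p.Prime] (hG : IsPGroup p G)
    (hlt : Module.finrank ℂ V < p) (h : Irr ρ) : Module.finrank ℂ V = 1 := by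
  have h1 := finrank_le_index ρ ⊤ (fun a b => commute_all ρ hG hlt a b) h
  haveI := h.1
  have : 0 < Module.finrank ℂ V := Module.finrank_pos
  simp at h1
  omega

lemma normal_of_index_prime {G : Type} [Group G] [Finite G] {p : ℕ} [hp : Fact p.Prime]
    (hG : IsPGroup p G) (H : Subgroup G) (hH : H.index = p) : H.Normal := by
  apply Subgroup.normal_of_index_eq_minFac_card
  obtain ⟨k, hk⟩ := IsPGroup.iff_card.1 hG
  have hk0 : k ≠ 0 := by
    rintro rfl
    have := H.index_dvd_card
    rw [hk, hH, pow_zero, Nat.dvd_one] at this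
    exact hp.out.one_lt.ne' this
  rw [hk, hp.out.pow_minFac hk0, hH]

lemma exists_index_p {G V : Type} [Group G] [Finite G] [AddCommGroup V] [Module ℂ V]
    [FiniteDimensional ℂ V] (ρ : G →* Module.End ℂ V) {p : ℕ} [hp : Fact p.Prime]
    (hG : IsPGroup p G) (hnc : ¬ ∀ a b : G, a * b = b * a) (hinj : Function.Injective ρ)
    (hlt : Module.finrank ℂ V < p ^ 2) (h : Irr ρ) :
    ∃ H : Subgroup G, H.index = p ∧ ∀ a b : H, a * b = b * a := by
  obtain ⟨A, hN, hA, hAc⟩ := exists_abelian hG hnc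
  have hA' : ∀ a b : A, Commute (ρ a) (ρ b) := by
    intro a b
    change ρ a * ρ b = ρ b * ρ a
    rw [← map_mul, ← map_mul]
    exact congrArg ρ (congrArg Subtype.val (hA a b))
  haveI := h.1
  letI := wtAct A
  obtain ⟨χ, hχ⟩ := exists_wt ρ A hA'
  obtain ⟨hf, hb⟩ := orbit_bound ρ A hA' χ hχ
  obtain ⟨k, hk⟩ := hG.card_orbit χ
  have hpos : 0 < Module.finrank ℂ (wt ρ A χ) := by
    haveI := Submodule.nontrivial_iff_ne_bot.2 hχ
    exact Module.finrank_pos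
  have hk0 : k ≠ 0 := by
    rintro rfl
    rw [pow_zero] at hk
    have hfix : ∀ g : G, (wtAct A).smul g χ = χ := by
      intro g
      have hs := (Nat.card_eq_one_iff_unique.1 hk).1
      exact congrArg Subtype.val (hs.elim ⟨g • χ, g, rfl⟩ ⟨χ, MulAction.mem_orbit_self χ⟩)
    have htop : wt ρ A χ = ⊤ := by
      refine (h.2 _ ?_).resolve_left hχ
      intro g v hv
      have := rho_mem_wt ρ A g χ v hv
      rwa [hfix] at this
    apply hAc
    intro a ha
    rw [Subgroup.mem_center_iff]
    intro g
    apply hinj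
    have hs : ∀ v, ρ a v = χ ⟨a, ha⟩ • v := fun v =>
      (mem_wt ρ A).1 (htop ▸ Submodule.mem_top : v ∈ wt ρ A χ) ⟨a, ha⟩
    ext v
    simp [hs]
  have hk1 : k = 1 := by
    by_contra hk1
    have h2 : p ^ 2 ≤ p ^ k := Nat.pow_le_pow_right hp.out.pos (by omega)
    rw [← hk] at h2
    have := Nat.le_mul_of_pos_right (Nat.card (MulAction.orbit G χ)) hpos
    omega
  rw [hk1, pow_one] at hk
  rw [hk] at hb
  have hW : Module.finrank ℂ (wt ρ A χ) < p := by
    by_contra hge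
    have := Nat.mul_le_mul_left p (not_lt.1 hge)
    rw [sq] at hlt
    omega
  let H := MulAction.stabilizer G χ
  have hHi : H.index = p := by
    rw [MulAction.index_stabilizer, ← hk]
    rfl
  have hHN := normal_of_index_prime hG H hHi
  have hmaps : ∀ x : H, ∀ v ∈ wt ρ A χ, ρ x v ∈ wt ρ A χ := by
    intro x v hv
    have := rho_mem_wt ρ A x χ v hv
    have hx : (wtAct A).smul (x : G) χ = χ := x.2
    rwa [hx] at this
  let σ : H →* Module.End ℂ (wt ρ A χ) :=
    { toFun := fun x => (ρ x).restrict (hmaps x)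
      map_one' := by ext v; simp
      map_mul' := by intro x y; ext v; simp }
  have hcomm : ∀ x y : H, ∀ v ∈ wt ρ A χ, ρ x (ρ y v) = ρ y (ρ x v) := by
    intro x y v hv
    have := commute_all σ (hG.to_subgroup H) hW x y
    exact congrArg Subtype.val (LinearMap.congr_fun this ⟨v, hv⟩)
  let U : Submodule ℂ V := ⨅ x : H, ⨅ y : H, LinearMap.ker (ρ x * ρ y - ρ y * ρ x)
  have hU : ∀ v, v ∈ U ↔ ∀ x y : H, ρ x (ρ y v) = ρ y (ρ x v) := by
    intro v
    simp [U, sub_eq_zero]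
  have hUtop : U = ⊤ := by
    refine (h.2 U ?_).resolve_left ?_
    · intro g v hv
      rw [hU] at hv ⊢
      intro x y
      have hx : ∀ (x : H) (w : V), ρ x (ρ g w) = ρ g (ρ (MulAut.conjNormal g⁻¹ x : H) w) := by
        intro x w
        have h1 : (x : G) * g = g * (MulAut.conjNormal g⁻¹ x : H) := by
          simp [mul_assoc]
        rw [← Module.End.mul_apply, ← map_mul, h1, map_mul, Module.End.mul_apply]
      rw [hx y, hx x, hx x, hx y, hv]
    · intro hbot
      apply hχ
      rw [eq_bot_iff, ← hbot]
      intro v hv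
      rw [hU]
      exact fun x y => hcomm x y v hv
  refine ⟨H, hHi, ?_⟩
  intro x y
  apply Subtype.ext
  apply hinj
  ext v
  have := (hU v).1 (hUtop ▸ Submodule.mem_top) x y
  simpa using this

lemma central_of_card_le {G : Type} [Group G] [Finite G] {p : ℕ} [hp : Fact p.Prime]
    (hG : IsPGroup p G) (K : Subgroup G) [hK : K.Normal] (hc : Nat.card K ≤ p) :
    K ≤ Subgroup.center G := by
  rcases (hG.to_subgroup K).card_eq_or_dvd with h1 | hd
  · rw [Subgroup.card_eq_one.1 h1]; exact bot_le
  · have hcp : Nat.card K = p := le_antisymm hc (Nat.le_of_dvd Nat.card_pos hd)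
    letI : MulAction G K := MulAction.compHom K (MulAut.conjNormal : G →* MulAut K)
    have hsm : ∀ (g : G) (k : K), g • k = MulAut.conjNormal g k := fun _ _ => rfl
    obtain ⟨b, hb, hb1⟩ := hG.exists_fixed_point_of_prime_dvd_card_of_fixed_point K hd
      (a := (1 : K)) (fun g => by rw [hsm, map_one])
    have hz := zpowers_eq_top_of_prime_card hcp (Ne.symm hb1)
    have hbc : (b : G) ∈ Subgroup.center G := by
      rw [Subgroup.mem_center_iff]
      intro g
      have := congrArg Subtype.val (hb g)
      rw [hsm, MulAut.conjNormal_apply] at this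
      exact mul_inv_eq_iff_eq_mul.1 this
    intro x hx
    have : (⟨x, hx⟩ : K) ∈ Subgroup.zpowers b := hz ▸ Subgroup.mem_top _
    obtain ⟨i, hi⟩ := this
    have : x = (b : G) ^ i := by simpa using (congrArg Subtype.val hi).symm
    rw [this]
    exact Subgroup.zpow_mem _ hbc i

lemma comm_of_linear {G V : Type} [Group G] [Finite G] [AddCommGroup V] [Module ℂ V]
    [FiniteDimensional ℂ V] (ρ : G →* Module.End ℂ V) {p : ℕ} [hp : Fact p.Prime]
    (hG : IsPGroup p G) (h1 : Module.finrank ℂ V = 1)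
    (hker : Nat.card ρ.toHomUnits.ker ≤ p) : ∀ a b : G, a * b = b * a := by
  let f : G →* ℂˣ := (Units.map (LinearMap.det : Module.End ℂ V →* ℂ)).comp ρ.toHomUnits
  have hle : f.ker ≤ ρ.toHomUnits.ker := by
    intro g hg
    have hd : LinearMap.det (ρ g) = 1 := congrArg Units.val hg
    rw [MonoidHom.mem_ker]
    ext v
    obtain ⟨c, hc⟩ := (LinearMap.existsUnique_eq_smul_id_of_finrank_eq_one h1 (ρ g)).exists
    rw [hc] at hd
    simp [h1] at hd
    simp [hc, hd]
  have hcyc : IsCyclic f.range := by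
    haveI : Finite f.range := Finite.of_surjective f.rangeRestrict f.rangeRestrict_surjective
    infer_instance
  have hk : f.rangeRestrict.ker ≤ Subgroup.center G := by
    rw [MonoidHom.ker_rangeRestrict]
    exact hle.trans (central_of_card_le hG _ hker)
  exact fun a b => (f.rangeRestrict.isMulCommutative_of_isCyclic_of_ker_le_center hk).is_comm.comm a b

lemma irr_of_simple {G : Type} [Group G] (V : FDRep ℂ G) (hV : Simple V) :
    Irr (V := V) V.ρ := by
  constructor
  · by_contra hnt
    rw [not_nontrivial_iff_subsingleton] at hnt
    apply id_nonzero V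
    ext v
    exact Subsingleton.elim (α := V) _ _
  · intro W hW
    let σ : Representation ℂ G W :=
      { toFun := fun g => (V.ρ g).restrict (hW g)
        map_one' := by ext v; simp
        map_mul' := by intro x y; ext v; simp }
    let f : FDRep.of σ ⟶ V :=
      { hom := FGModuleCat.ofHom W.subtype
        comm := fun g => by ext v; rfl }
    have hinj : Function.Injective f := Subtype.val_injective
    haveI : Mono f := ConcreteCategory.mono_of_injective f hinj
    by_cases hf : f = 0
    · left
      rw [eq_bot_iff]
      intro v hv
      have : f ⟨v, hv⟩ = 0 := by rw [hf]; rfl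
      exact this
    · right
      haveI := isIso_of_mono_of_nonzero hf
      have hs : Function.Surjective f := (ConcreteCategory.bijective_of_isIso f).2
      rw [eq_top_iff]
      intro v _
      obtain ⟨w, hw⟩ := hs v
      rw [← hw]
      exact w.2

lemma one_mem_cd (G : Type) [Group G] [Fintype G] : 1 ∈ cdSet G := by
  refine ⟨FDRep.of (Representation.trivial ℂ G ℂ), ?_, ?_⟩
  · rw [FDRep.simple_iff_char_is_norm_one]
    simp [FDRep.character]
  · exact Module.finrank_self ℂ

end MaxClassAux

open MaxClassAux in
theorem maximal_class_top_codegree (p n : ℕ) (hp : p.Prime) (G : Type) [Group G] [Fintype G]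
    (hcard : Fintype.card G = p ^ n) (hn : 3 ≤ n) (hmax : nilClass G = n - 1) :
    (p ^ (n - 1) ∈ codSet G → cdSet G = {1, p}) ∧
      (cdSet G ≠ {1, p} → ∀ V : FDRep ℂ G, Simple V → codegree V ≤ p ^ (n - 2)) := by
  have key : cdSet G ≠ {1, p} → ∀ V : FDRep ℂ G, Simple V → codegree V ≤ p ^ (n - 2) := by
    intro hcd V hV
    by_contra hlt
    apply hcd
    clear hcd
    rw [not_le] at hlt
    haveI : Fact p.Prime := ⟨hp⟩
    have hcard' : Nat.card G = p ^ n := by rw [Nat.card_eq_fintype_card, hcard]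
    have hG : IsPGroup p G := IsPGroup.of_card hcard'
    have hnc : ¬ ∀ a b : G, a * b = b * a := by
      intro hc
      have : nilClass G ≤ 1 := by
        apply Nat.sInf_le
        change Subgroup.upperCentralSeries G 1 = ⊤
        rw [Subgroup.upperCentralSeries_one, eq_top_iff]
        intro x _
        rw [Subgroup.mem_center_iff]
        exact fun y => hc y x
      omega
    have hI := irr_of_simple V hV
    have hfin : FiniteDimensional ℂ V := inferInstance
    have hidx : (repKer V).index * Nat.card (repKer V) = p ^ n := by
      rw [mul_comm, Subgroup.card_mul_index, hcard']
    obtain ⟨k, hkn, hk⟩ := (Nat.dvd_prime_pow hp).1 (Dvd.intro _ hidx)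
    have hnt := hI.1
    have hdpos : 0 < repDegree V := Module.finrank_pos (R := ℂ) (M := V)
    have hp1 := hp.one_lt
    unfold codegree at hlt
    rw [hk] at hlt
    have hd1 : repDegree V ≠ 1 := by
      intro h1
      rw [h1, Nat.div_one] at hlt
      have hk' := (Nat.pow_lt_pow_iff_right hp1).1 hlt
      refine hnc (comm_of_linear V.ρ hG h1 ?_)
      change Nat.card (repKer V) ≤ p
      rw [hk] at hidx
      have h2 : p ^ n ≤ p ^ k * p := by
        rw [← pow_succ]; exact Nat.pow_le_pow_right hp.pos (by omega)
      rw [← hidx] at h2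
      exact Nat.le_of_mul_le_mul_left h2 (pow_pos hp.pos k)
    have hge : ∀ W : FDRep ℂ G, Simple W → repDegree W ≠ 1 → p ≤ repDegree W := by
      intro W hW h1
      by_contra hlt
      exact h1 (finrank_one (V := W) W.ρ hG (not_le.1 hlt) (irr_of_simple W hW))
    have hdp := hge V hV hd1
    have hkn' : k = n := by
      by_contra hne
      have h3 : p ^ k / repDegree V ≤ p ^ (n - 1) / p :=
        Nat.div_le_div (Nat.pow_le_pow_right hp.pos (by omega)) hdp hp.ne_zero
      have h4 : p ^ (n - 1) / p = p ^ (n - 2) := by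
        rw [show n - 1 = (n - 2) + 1 by omega, pow_succ, Nat.mul_div_cancel _ hp.pos]
      omega
    subst hkn'
    have hinj : Function.Injective V.ρ := by
      have hc1 : Nat.card (repKer V) = 1 := by
        rw [hk] at hidx
        exact Nat.eq_of_mul_eq_mul_left (pow_pos hp.pos k) (by rw [hidx, mul_one])
      have hb : (Representation.asGroupHom V.ρ).ker = ⊥ := Subgroup.card_eq_one.1 hc1
      rw [MonoidHom.ker_eq_bot_iff] at hb
      intro x y hxy
      apply hb
      apply Units.ext
      exact hxy
    have hd2 : repDegree V < p ^ 2 := by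
      by_contra hge2
      have h3 : p ^ k / repDegree V ≤ p ^ k / p ^ 2 :=
        Nat.div_le_div_left (not_lt.1 hge2) (pow_pos hp.pos 2)
      have h4 : p ^ k / p ^ 2 = p ^ (k - 2) := Nat.pow_div (by omega) hp.pos
      omega
    obtain ⟨H, hHi, hHc⟩ := exists_index_p V.ρ hG hnc hinj hd2 hI
    have hle : ∀ W : FDRep ℂ G, Simple W → repDegree W ≤ p := by
      intro W hW
      rw [← hHi]
      refine finrank_le_index (V := W) W.ρ H ?_ (irr_of_simple W hW)
      intro a b
      change W.ρ a * W.ρ b = W.ρ b * W.ρ a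
      rw [← map_mul, ← map_mul]
      exact congrArg W.ρ (congrArg Subtype.val (hHc a b))
    ext m
    simp only [Set.mem_insert_iff, Set.mem_singleton_iff]
    constructor
    · rintro ⟨W, hW, rfl⟩
      by_cases h1 : repDegree W = 1
      · exact Or.inl h1
      · exact Or.inr (le_antisymm (hle W hW) (hge W hW h1))
    · rintro (rfl | rfl)
      · exact one_mem_cd G
      · exact ⟨V, hV, le_antisymm (hle V hV) hdp⟩
  refine ⟨?_, key⟩
  rintro ⟨V, hV, hVc⟩
  by_contra hne
  have h1 := key hne V hV
  rw [hVc] at h1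
  have := (Nat.pow_le_pow_iff_right hp.one_lt).1 h1
  omega
end
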